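/- The union ⊎_{i=1}^n R(G_i) of the rewrite systems of n pairwise symbol-disjoint sets of group axioms is convergent modulo A: the rewrite relation (⊎_{i=1}^n R(G_i))/A on associatively flat terms is confluent and terminating. -/

import Mathlib

/-!
Termination comes from a strictly increasing interpretation over `ℕ` in which associative symbols
are associative and every rule decreases.

For confluence, view a term as an element of the free group on its maximal subterms that are not
built by the operations of one fixed group `G_l`; spelling the reduced word of that element
normalizes the term with respect to `G_l`. Each function symbol belongs to at most one group, so
the terms that are normal with respect to every group and flat for the remaining associative
symbols form an algebra: apply a symbol, then normalize at the root in the group that owns it.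
This algebra satisfies the associativity axioms and all the rules, so its evaluation is invariant
under rewriting modulo `A`, and every term reduces modulo `A` to its value. Hence two reducts of
one term reduce to the same normal term.
-/

/- ----------------------------------------------------------------------
  A formalization of the framework of "Congruence Closure Modulo Groups":
  variadic terms over a signature with associative symbols, rewriting
  modulo the (variadic) associativity axioms A, the rewrite system R(G)
  for the group axioms, ground flat equations, the completion inference
  system 𝓘, derivations, fairness, critical pairs modulo A, congruence
  closure modulo a set of axioms, and the Phase I / Phase II
  transformations producing S(E).
---------------------------------------------------------------------- -/

namespace CCModG

/-- Variadic first-order terms: variables (indexed by ℕ), constants from `γ`,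
and applications of function symbols from `F` to lists of terms. -/
inductive Tm (F : Type) (γ : Type) : Type
  | var : ℕ → Tm F γ
  | cst : γ → Tm F γ
  | app : F → List (Tm F γ) → Tm F γ

/-- Equations are (ordered representations of unordered) pairs of terms. -/
abbrev Eqn (F γ : Type) := Tm F γ × Tm F γ

variable {F γ C₀ : Type}

/-- Application of a substitution. -/
def Tm.subst (σ : ℕ → Tm F γ) : Tm F γ → Tm F γ
  | .var n => σ n
  | .cst c => .cst c
  | .app f ts => .app f (ts.attach.map (fun t => Tm.subst σ t.1))
decreasing_by
  have := List.sizeOf_lt_of_mem t.2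
  simp only [Tm.app.sizeOf_spec]
  omega

/-- Ground terms: terms containing no variables. -/
inductive Ground : Tm F γ → Prop
  | cst : ∀ c, Ground (.cst c)
  | app : ∀ (f : F) (ts : List (Tm F γ)), (∀ t ∈ ts, Ground t) → Ground (.app f ts)

/-- `headIs f t` holds iff `t` is headed by the function symbol `f`. -/
def headIs (f : F) (t : Tm F γ) : Prop := ∃ ts, t = Tm.app f ts

/-- Associatively flat terms (w.r.t. the set `SA` of associative symbols):
every subterm headed by an associative symbol `f` has at least two arguments,
none of which is headed by `f` again. -/
inductive Flat (SA : Set F) : Tm F γ → Prop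
  | var : ∀ n, Flat SA (.var n)
  | cst : ∀ c, Flat SA (.cst c)
  | app : ∀ (f : F) (ts : List (Tm F γ)), (∀ t ∈ ts, Flat SA t) →
      (f ∈ SA → 2 ≤ ts.length ∧ ∀ t ∈ ts, ¬ headIs f t) → Flat SA (.app f ts)

/-- The (variadic) associativity axiom scheme `A`:
`f(x₁,…,x_m, f(y₁,…,y_i), z₁,…,z_n) ≈ f(x₁,…,x_m, y₁,…,y_i, z₁,…,z_n)`
(stated for arbitrary argument terms, so it covers all instances). -/
def ASax (SA : Set F) (s t : Tm F γ) : Prop :=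
  ∃ (f : F) (us ws vs : List (Tm F γ)), f ∈ SA ∧ 2 ≤ ws.length ∧
    1 ≤ us.length + vs.length ∧
    s = .app f (us ++ (Tm.app f ws) :: vs) ∧ t = .app f (us ++ ws ++ vs)

/-- Closure of a relation under contexts (application at any position). -/
inductive Ctx (r : Tm F γ → Tm F γ → Prop) : Tm F γ → Tm F γ → Prop
  | base : ∀ {s t}, r s t → Ctx r s t
  | app : ∀ {s t} (f : F) (us vs : List (Tm F γ)), Ctx r s t →
      Ctx r (.app f (us ++ s :: vs)) (.app f (us ++ t :: vs))

/-- Equality modulo associativity `A`: the reflexive–transitive–symmetric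
closure of the associativity axioms applied at arbitrary positions. -/
def AEq (SA : Set F) : Tm F γ → Tm F γ → Prop :=
  Relation.ReflTransGen (fun s t => Ctx (ASax SA) s t ∨ Ctx (ASax SA) t s)

/-- One root rewrite step with a rule of `R` (applied to some instance). -/
def RuleStep (R : Set (Eqn F γ)) (s t : Tm F γ) : Prop :=
  ∃ l r σ, (l, r) ∈ R ∧ s = Tm.subst σ l ∧ t = Tm.subst σ r

/-- Plain rewriting with `R` (a rule applied at any position). -/
def Rew (R : Set (Eqn F γ)) : Tm F γ → Tm F γ → Prop := Ctx (RuleStep R)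

/-- Rewriting with `R` modulo associativity: `u →_{R/A} v` iff
`u ≈_A s →_R t ≈_A v` for some `s`, `t`. -/
def RewA (SA : Set F) (R : Set (Eqn F γ)) (s t : Tm F γ) : Prop :=
  ∃ s' t', AEq SA s s' ∧ Rew R s' t' ∧ AEq SA t' t

/-- A relation `r` is terminating on the terms satisfying `P`:
there is no infinite `r`-chain of such terms. -/
def TerminatingOn {α : Type*} (r : α → α → Prop) (P : α → Prop) : Prop :=
  ¬ ∃ g : ℕ → α, (∀ n, P (g n)) ∧ ∀ n, r (g n) (g (n + 1))

/-- `R/A` is confluent (modulo `A`) on the terms satisfying `P`. -/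
def ConfluentModAOn (SA : Set F) (R : Set (Eqn F γ)) (P : Tm F γ → Prop) : Prop :=
  ∀ a b c, P a → P b → P c →
    Relation.ReflTransGen (RewA SA R) a b → Relation.ReflTransGen (RewA SA R) a c →
    ∃ u v, Relation.ReflTransGen (RewA SA R) b u ∧
      Relation.ReflTransGen (RewA SA R) c v ∧ AEq SA u v

/-- The convergent rewrite system `R(G)` for the group axioms with the
associative symbol `fG`, the inverse symbol `iG` and the unit `one`:
`i(1)→1, f(x,1)→x, f(1,x)→x, i(i(x))→x, f(x,i(x))→1, f(i(x),x)→1,`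
`i(f(x,y))→f(i(y),i(x))`. -/
def RGrules (fG iG : F) (one : γ) : Set (Eqn F γ) :=
  {(.app iG [.cst one], .cst one),
   (.app fG [.var 0, .cst one], .var 0),
   (.app fG [.cst one, .var 0], .var 0),
   (.app iG [.app iG [.var 0]], .var 0),
   (.app fG [.var 0, .app iG [.var 0]], .cst one),
   (.app fG [.app iG [.var 0], .var 0], .cst one),
   (.app iG [.app fG [.var 0, .var 1]], .app fG [.app iG [.var 1], .app iG [.var 0]])}

/-- The rewrite system `R(M)` for the monoid axioms:
`f(x,1)→x` and `f(1,x)→x`. -/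
def RMrules (fG : F) (one : γ) : Set (Eqn F γ) :=
  {(.app fG [.var 0, .cst one], .var 0),
   (.app fG [.cst one, .var 0], .var 0)}

/-- Ground instances of a set of (possibly nonground) rules/equations. -/
def grInst (R : Set (Eqn F γ)) : Set (Eqn F γ) :=
  {e | ∃ l r σ, (l, r) ∈ R ∧ (∀ n, Ground (σ n)) ∧
        e = (Tm.subst σ l, Tm.subst σ r)}

/-- `gr(A)`: the ground instances of the associativity axioms. -/
def grA (SA : Set F) : Set (Eqn F γ) :=
  {e | ASax SA e.1 e.2 ∧ Ground e.1 ∧ Ground e.2}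

/-- One replacement step using a set of equations (in either direction,
at any position). -/
def EqStep (S : Set (Eqn F γ)) : Tm F γ → Tm F γ → Prop :=
  Ctx (fun a b => (a, b) ∈ S ∨ (b, a) ∈ S)

/-- `↔*_S`: the congruence (equational theory) generated by the set `S` of
(ground) equations: the reflexive–transitive closure of `EqStep S`. -/
def EqCl (S : Set (Eqn F γ)) : Tm F γ → Tm F γ → Prop :=
  Relation.ReflTransGen (EqStep S)

/-- Replacement of one occurrence of `u` by `v` (at any position). -/
def Repl (u v : Tm F γ) : Tm F γ → Tm F γ → Prop :=
  Ctx (fun a b => a = u ∧ b = v)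

/-- Terms all of whose constants come from the original set `C₀`
(the constant set is `C₀ ⊕ ℕ`, the new constants being the `Sum.inr` ones). -/
inductive InC0 : Tm F (C₀ ⊕ ℕ) → Prop
  | var : ∀ n, InC0 (.var n)
  | cst : ∀ c : C₀, InC0 (.cst (Sum.inl c))
  | app : ∀ (f : F) (ts : List (Tm F (C₀ ⊕ ℕ))), (∀ t ∈ ts, InC0 t) → InC0 (.app f ts)

/-- `fS f u` is the term `f(u)` whose argument string is `u`. -/
def fS (f : F) (u : List γ) : Tm F γ := .app f (u.map .cst)

/-- Ground flat equations (Definition 3.1): C-constant equations, D-flat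
equations, and A-flat equations. -/
def GFlatEq (SA : Set F) (e : Eqn F γ) : Prop :=
  (∃ c d : γ, e = (.cst c, .cst d)) ∨
  (∃ (g : F) (cs : List γ) (c : γ), 1 ≤ cs.length ∧ (g ∈ SA → 2 ≤ cs.length) ∧
      e = (fS g cs, .cst c)) ∨
  (∃ (f : F) (cs ds : List γ), f ∈ SA ∧ 2 ≤ cs.length ∧ 2 ≤ ds.length ∧
      e = (fS f cs, fS f ds))

/-- The total order `≻` on the constants `C = C₀ ⊕ ℕ` (Definition 3.5
(i)–(iii)): new constants are compared by index (`c_i ≻ c_j` iff `i < j`),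
every new constant is greater than every original constant, and original
constants are compared via the given precedence `prec`. -/
def cGT (prec : C₀ → ℕ) : (C₀ ⊕ ℕ) → (C₀ ⊕ ℕ) → Prop
  | Sum.inr i, Sum.inr j => i < j
  | Sum.inr _, Sum.inl _ => True
  | Sum.inl a, Sum.inl b => prec b < prec a
  | Sum.inl _, Sum.inr _ => False

/-- The length-lexicographic order on strings over `C` (longer strings are
greater; strings of equal length are compared lexicographically). -/
def strGT (prec : C₀ → ℕ) (u v : List (C₀ ⊕ ℕ)) : Prop :=
  v.length < u.length ∨
  (u.length = v.length ∧ List.Lex (fun a b => cGT prec b a) v u)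

/-- The order `≻` on ground flat terms (Definition 3.5). -/
inductive TGT (SA : Set F) (prec : C₀ → ℕ) : Tm F (C₀ ⊕ ℕ) → Tm F (C₀ ⊕ ℕ) → Prop
  | cc : ∀ {c d}, cGT prec c d → TGT SA prec (.cst c) (.cst d)
  | tc : ∀ (g : F) (ts : List (Tm F (C₀ ⊕ ℕ))) (c : C₀ ⊕ ℕ),
      TGT SA prec (.app g ts) (.cst c)
  | aa : ∀ {f u v}, f ∈ SA → strGT prec u v → TGT SA prec (fS f u) (fS f v)

/-- `IsStr f t w`: the term `t` is either a constant (with one-letter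
string `w`) or a term `f(w)` with argument string `w`. -/
def IsStr (f : F) (t : Tm F γ) (w : List γ) : Prop :=
  (∃ c, t = .cst c ∧ w = [c]) ∨ (2 ≤ w.length ∧ t = fS f w)

/-- `f̄(w)`: the term `f(w)` if `|w| ≥ 2`, and the constant itself if `w` is
a single letter. -/
def fbar (f : F) (w : List γ) : Tm F γ :=
  match w with
  | [c] => .cst c
  | w => .app f (w.map .cst)

/-- The inference system 𝓘 (Figure 1) on sets of ground flat equations, with
argument strings of associative symbols represented as lists over `C`. -/
inductive Infer (SA : Set F) (prec : C₀ → ℕ) :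
    Set (Eqn F (C₀ ⊕ ℕ)) → Set (Eqn F (C₀ ⊕ ℕ)) → Prop
  | deduce : ∀ {S : Set (Eqn F (C₀ ⊕ ℕ))} {f u1 u2 u3 s t ss ts},
      f ∈ SA → u1 ≠ [] → u2 ≠ [] → u3 ≠ [] →
      (fS f (u1 ++ u2), s) ∈ S → (fS f (u2 ++ u3), t) ∈ S →
      TGT SA prec (fS f (u1 ++ u2)) s → TGT SA prec (fS f (u2 ++ u3)) t →
      IsStr f s ss → IsStr f t ts →
      Infer SA prec S (insert (fS f (u1 ++ ts), fS f (ss ++ u3)) S)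
  | simplify : ∀ {S : Set (Eqn F (C₀ ⊕ ℕ))} {f u1 u2 u3 s t ts},
      f ∈ SA → 2 ≤ u2.length →
      (fS f (u1 ++ u2 ++ u3), s) ∈ S → (fS f u2, t) ∈ S →
      TGT SA prec (fS f u2) t → (u1 ++ u3 = [] → TGT SA prec s t) →
      IsStr f t ts →
      Infer SA prec S (insert (fbar f (u1 ++ ts ++ u3), s)
        (S \ {(fS f (u1 ++ u2 ++ u3), s)}))
  | collapse : ∀ {S : Set (Eqn F (C₀ ⊕ ℕ))} {s t u d s'},
      (s, t) ∈ S → (u, .cst d) ∈ S →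
      TGT SA prec s t → TGT SA prec u (.cst d) →
      (∀ f ts, u = .app f ts → f ∉ SA) →
      Repl u (.cst d) s s' →
      Infer SA prec S (insert (s', t) (S \ {(s, t)}))
  | compose : ∀ {S : Set (Eqn F (C₀ ⊕ ℕ))} {t c d},
      (t, .cst c) ∈ S → (.cst c, .cst d) ∈ S →
      TGT SA prec t (.cst c) → cGT prec c d →
      Infer SA prec S (insert (t, .cst d) (S \ {(t, .cst c)}))
  | delete : ∀ {S : Set (Eqn F (C₀ ⊕ ℕ))} {s},
      (s, s) ∈ S → Infer SA prec S (S \ {(s, s)})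

/-- A (possibly stuttering) derivation w.r.t. the inference system 𝓘. -/
def IsDeriv (SA : Set F) (prec : C₀ → ℕ) (D : ℕ → Set (Eqn F (C₀ ⊕ ℕ))) : Prop :=
  ∀ n, Infer SA prec (D n) (D (n + 1)) ∨ D (n + 1) = D n

/-- The set `S_∞ = ⋃_i ⋂_{j ≥ i} S_j` of persisting equations. -/
def Sinf {α : Type*} (D : ℕ → Set α) : Set α := {e | ∃ N, ∀ j, N ≤ j → e ∈ D j}

/-- Fairness of a derivation: every inference that is applicable to the
persisting equations (hence continuously enabled) is accounted for: all of
its conclusions appear somewhere in the derivation, and it removes no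
persisting equation. -/
def Fair (SA : Set F) (prec : C₀ → ℕ) (D : ℕ → Set (Eqn F (C₀ ⊕ ℕ))) : Prop :=
  ∀ S', Infer SA prec (Sinf D) S' → (S' ⊆ ⋃ k, D k) ∧ Sinf D ⊆ S'

/-- `S^≻`: the rewrite system obtained by orienting each equation of `S` by
the order `≻`. -/
def orient (SA : Set F) (prec : C₀ → ℕ) (S : Set (Eqn F (C₀ ⊕ ℕ))) :
    Set (Eqn F (C₀ ⊕ ℕ)) :=
  {e | TGT SA prec e.1 e.2 ∧ (e ∈ S ∨ (e.2, e.1) ∈ S)}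

/-- The critical pairs modulo associativity `CP_A(R)` (Definition 3.7). -/
def CPA (SA : Set F) (prec : C₀ → ℕ) (R : Set (Eqn F (C₀ ⊕ ℕ))) :
    Set (Eqn F (C₀ ⊕ ℕ)) :=
  {e | ∃ f u1 u2 u3 s t ss ts, f ∈ SA ∧ u1 ≠ [] ∧ u2 ≠ [] ∧ u3 ≠ [] ∧
      (fS f (u1 ++ u2), s) ∈ R ∧ (fS f (u2 ++ u3), t) ∈ R ∧
      IsStr f s ss ∧ IsStr f t ts ∧ e = (fS f (u1 ++ ts), fS f (ss ++ u3))} ∪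
  {e | ∃ f u1 u2 u3 s t ts, f ∈ SA ∧ 2 ≤ u2.length ∧
      (fS f (u1 ++ u2 ++ u3), s) ∈ R ∧ (fS f u2, t) ∈ R ∧
      (u1 ++ u3 = [] → TGT SA prec s t) ∧ IsStr f t ts ∧
      e = (fbar f (u1 ++ ts ++ u3), s)} ∪
  {e | ∃ s t u d s', (s, t) ∈ R ∧ (u, Tm.cst d) ∈ R ∧
      (∀ f ts, u = .app f ts → f ∉ SA) ∧ Repl u (.cst d) s s' ∧ e = (s', t)}

/-- Congruence closure `CC^F(E)` of a set `E` of ground equations over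
`T(Σ, C₀)` w.r.t. a set `Ax` of (possibly nonground) axioms: the smallest
relation containing `E`, containing every ground `C₀`-instance of the
axioms, and closed under reflexivity, symmetry, transitivity and
congruence. -/
inductive CCax (E Ax : Set (Eqn F (C₀ ⊕ ℕ))) :
    Tm F (C₀ ⊕ ℕ) → Tm F (C₀ ⊕ ℕ) → Prop
  | base : ∀ {s t}, (s, t) ∈ E → CCax E Ax s t
  | inst : ∀ {l r} (σ : ℕ → Tm F (C₀ ⊕ ℕ)), (l, r) ∈ Ax →
      (∀ n, Ground (σ n) ∧ InC0 (σ n)) → CCax E Ax (Tm.subst σ l) (Tm.subst σ r)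
  | refl : ∀ {s}, Ground s → InC0 s → CCax E Ax s s
  | symm : ∀ {s t}, CCax E Ax s t → CCax E Ax t s
  | trans : ∀ {s t u}, CCax E Ax s t → CCax E Ax t u → CCax E Ax s u
  | congr : ∀ {f : F} {ss ts : List (Tm F (C₀ ⊕ ℕ))},
      List.Forall₂ (CCax E Ax) ss ts → CCax E Ax (.app f ss) (.app f ts)

/-- The associativity axioms `A` as a set of equations. -/
def AaxS (SA : Set F) : Set (Eqn F γ) := {e | ASax SA e.1 e.2}

/-- The group axioms
`G = A ∪ {f(x,1)≈x, f(1,x)≈x, f(x,i(x))≈1, f(i(x),x)≈1}`. -/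
def GrpAxS (SA : Set F) (fG iG : F) (one : γ) : Set (Eqn F γ) :=
  AaxS SA ∪
  {(.app fG [.var 0, .cst one], .var 0), (.app fG [.cst one, .var 0], .var 0),
   (.app fG [.var 0, .app iG [.var 0]], .cst one),
   (.app fG [.app iG [.var 0], .var 0], .cst one)}

/-- The monoid axioms `M = A ∪ {f(x,1)≈x, f(1,x)≈x}`. -/
def MonAxS (SA : Set F) (fG : F) (one : γ) : Set (Eqn F γ) :=
  AaxS SA ∪
  {(.app fG [.var 0, .cst one], .var 0), (.app fG [.cst one, .var 0], .var 0)}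

/-- Evaluation of a term in an algebra with carrier `M`, interpretation `J`
of function symbols (variadic), interpretation `K` of constants, and
variable assignment `ρ`. -/
def evalTm {M : Type} (J : F → List M → M) (K : γ → M) (ρ : ℕ → M) : Tm F γ → M
  | .var n => ρ n
  | .cst c => K c
  | .app f ts => J f (ts.attach.map (fun t => evalTm J K ρ t.1))
decreasing_by
  have := List.sizeOf_lt_of_mem t.2
  simp only [Tm.app.sizeOf_spec]
  omega

/-- `s ≈_Ax t`: the equation `s ≈ t` holds in every model of the set `Ax` of
equations (so for `Ax = E ∪ G` this is the word problem relation `≈_E^G`). -/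
def SemEq (Ax : Set (Eqn F γ)) (s t : Tm F γ) : Prop :=
  ∀ (M : Type) (J : F → List M → M) (K : γ → M),
    (∀ e ∈ Ax, ∀ ρ : ℕ → M, evalTm J K ρ e.1 = evalTm J K ρ e.2) →
    ∀ ρ : ℕ → M, evalTm J K ρ s = evalTm J K ρ t

/-- `n` is a normal form of `s` w.r.t. `R/A`. -/
def IsNF (SA : Set F) (R : Set (Eqn F γ)) (s n : Tm F γ) : Prop :=
  Relation.ReflTransGen (RewA SA R) s n ∧ ∀ t, ¬ RewA SA R n t

/-- `s` and `t` have the same normal form w.r.t. `R/A` (normal forms are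
determined up to `≈_A`; flat terms represent their `A`-equivalence class). -/
def SameNF (SA : Set F) (R : Set (Eqn F γ)) (s t : Tm F γ) : Prop :=
  ∃ m n, IsNF SA R s m ∧ IsNF SA R t n ∧ AEq SA m n

/-- Proper subterms of associatively flat ground terms, including the
extension: `f(u)` is a proper subterm of `f(v u w)` for `f ∈ Σ_A`,
`|u| ≥ 2`, `|vw| ≠ 0`. -/
inductive PSubt (SA : Set F) : Tm F γ → Tm F γ → Prop
  | arg : ∀ {s : Tm F γ} {f : F} {ts : List (Tm F γ)}, s ∈ ts → PSubt SA s (.app f ts)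
  | sub : ∀ {s t : Tm F γ} {f : F} {ts : List (Tm F γ)},
      PSubt SA s t → t ∈ ts → PSubt SA s (.app f ts)
  | seg : ∀ {f : F} {us vs ws : List γ}, f ∈ SA → 2 ≤ us.length → vs ++ ws ≠ [] →
      PSubt SA (.app f (us.map .cst)) (.app f ((vs ++ us ++ ws).map .cst))

/-- `c` occurs as a constant in the term. -/
inductive CstIn (c : γ) : Tm F γ → Prop
  | cst : CstIn c (.cst c)
  | app : ∀ {t : Tm F γ} {f : F} {ts : List (Tm F γ)},
      CstIn c t → t ∈ ts → CstIn c (.app f ts)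

/- ------------------- Phase I ------------------- -/

/-- `t` is a constant. -/
def isCst (t : Tm F γ) : Prop := ∃ c, t = Tm.cst c

/-- Abstraction of a term: replace each immediate argument by (the constant
naming it under) `nm`. -/
def abst (nm : Tm F γ → γ) : Tm F γ → Tm F γ
  | .app g ts => .app g (ts.map (fun t => Tm.cst (nm t)))
  | t => t

/-- Reflexive argument-subterm relation (standard subterms). -/
inductive ArgSub : Tm F γ → Tm F γ → Prop
  | refl : ∀ t, ArgSub t t
  | arg : ∀ {s t : Tm F γ} {f : F} {ts : List (Tm F γ)},
      ArgSub s t → t ∈ ts → ArgSub s (.app f ts)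

/-- Proper (argument-)subterm. -/
def ProperArg (s t : Tm F γ) : Prop :=
  ∃ (f : F) (ts : List (Tm F γ)) (u : Tm F γ), t = Tm.app f ts ∧ u ∈ ts ∧ ArgSub s u

/-- `s'` is obtained from `s` by associative flattening followed by
`R/A`-normalization: `s →*_{R/A} u ≈_A s'` with `s'` flat and
`R/A`-irreducible. -/
def GNF (SA : Set F) (R : Set (Eqn F γ)) (s s' : Tm F γ) : Prop :=
  ∃ u, Relation.ReflTransGen (RewA SA R) s u ∧ AEq SA u s' ∧ Flat SA s' ∧
    ∀ v, ¬ RewA SA R s' v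

/-- Steps 1–2 of Phase I: associatively flatten and normalize both sides of
each equation of `E` by `R/A`, removing trivial equations. -/
def PhaseI12 (SA : Set F) (R E : Set (Eqn F γ)) : Set (Eqn F γ) :=
  {e | ∃ p ∈ E, GNF SA R p.1 e.1 ∧ GNF SA R p.2 e.2 ∧ e.1 ≠ e.2}

/-- Flattening of `E` for the semigroup case (Phase I without the
normalization step 2): only associative flattening of both sides. -/
def PhaseI1Sem (SA : Set F) (E : Set (Eqn F γ)) : Set (Eqn F γ) :=
  {e | ∃ p ∈ E, AEq SA p.1 e.1 ∧ Flat SA e.1 ∧ AEq SA p.2 e.2 ∧ Flat SA e.2}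

/-- An equation whose two sides are nonconstant and not both headed by the
same associative symbol must be split using a fresh constant in step 3. -/
def SplitCase (SA : Set F) (p : Eqn F γ) : Prop :=
  ∃ (g : F) (as_ : List (Tm F γ)) (h : F) (bs : List (Tm F γ)),
    p.1 = Tm.app g as_ ∧ p.2 = Tm.app h bs ∧ ¬(g = h ∧ g ∈ SA)

/-- The terms receiving fresh names in step 3 of Phase I: the nonconstant
proper subterms of `E₂`, together with one side of each equation that must
be split. -/
def NeedName (SA : Set F) (E₂ : Set (Eqn F γ)) : Set (Tm F γ) :=
  {t | ¬ isCst t ∧ ∃ p ∈ E₂, ProperArg t p.1 ∨ ProperArg t p.2} ∪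
  {t | ∃ p ∈ E₂, SplitCase SA p ∧ t = p.1}

/-- The defining equations introduced by flattening: `abst(t) ≈ nm(t)` for
each nonconstant proper subterm `t` of `E₂`. -/
def DefEqs (nm : Tm F γ → γ) (E₂ : Set (Eqn F γ)) : Set (Eqn F γ) :=
  {e | ∃ t, (¬ isCst t ∧ ∃ p ∈ E₂, ProperArg t p.1 ∨ ProperArg t p.2) ∧
        e = (abst nm t, .cst (nm t))}

/-- The flat equations replacing a top-level equation `p ∈ E₂`. -/
def TopOf (SA : Set F) (nm : Tm F γ → γ) (p e : Eqn F γ) : Prop :=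
  (isCst p.1 ∧ isCst p.2 ∧ e = p) ∨
  (∃ (f : F) (as_ bs : List (Tm F γ)), f ∈ SA ∧ p.1 = Tm.app f as_ ∧
      p.2 = Tm.app f bs ∧ e = (abst nm p.1, abst nm p.2)) ∨
  (∃ (g : F) (as_ : List (Tm F γ)) (c : γ), p.1 = Tm.app g as_ ∧ p.2 = Tm.cst c ∧
      e = (abst nm p.1, .cst c)) ∨
  (∃ (g : F) (as_ : List (Tm F γ)) (c : γ), p.2 = Tm.app g as_ ∧ p.1 = Tm.cst c ∧
      e = (abst nm p.2, .cst c)) ∨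
  (SplitCase SA p ∧ (e = (abst nm p.1, .cst (nm p.1)) ∨ e = (abst nm p.2, .cst (nm p.1))))

/-- All top-level equations produced from `E₂`. -/
def TopEqs (SA : Set F) (nm : Tm F γ → γ) (E₂ : Set (Eqn F γ)) : Set (Eqn F γ) :=
  {e | ∃ p ∈ E₂, TopOf SA nm p e}

/-- Step 3 of Phase I: `E'` is obtained from the flattened, normalized set
`E₂` by naming nonflat subterms with fresh constants from `C₁ ⊆ ℕ` via the
injective naming function `nm`, recording the defining equations. -/
def IsFlattening (SA : Set F) (E₂ : Set (Eqn F (C₀ ⊕ ℕ)))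
    (nm : Tm F (C₀ ⊕ ℕ) → (C₀ ⊕ ℕ)) (C1 : Set ℕ) (E' : Set (Eqn F (C₀ ⊕ ℕ))) : Prop :=
  (∀ c, nm (.cst c) = c) ∧
  (∀ t ∈ NeedName SA E₂, ∃ i ∈ C1, nm t = Sum.inr i) ∧
  (∀ s ∈ NeedName SA E₂, ∀ t ∈ NeedName SA E₂, nm s = nm t → s = t) ∧
  (∀ i ∈ C1, ∃ t ∈ NeedName SA E₂, nm t = Sum.inr i) ∧
  C1.Finite ∧
  E' = DefEqs nm E₂ ∪ TopEqs SA nm E₂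

/-- Phase I (with normalization by `Rn/A`): flatten, normalize, then flatten
into ground flat equations using fresh constants. -/
def IsPhaseI (SA : Set F) (Rn E : Set (Eqn F (C₀ ⊕ ℕ)))
    (nm : Tm F (C₀ ⊕ ℕ) → (C₀ ⊕ ℕ)) (C1 : Set ℕ) (E' : Set (Eqn F (C₀ ⊕ ℕ))) : Prop :=
  IsFlattening SA (PhaseI12 SA Rn E) nm C1 E'

/-- Phase I for the semigroup case (no normalization step 2). -/
def IsPhaseISem (SA : Set F) (E : Set (Eqn F (C₀ ⊕ ℕ)))
    (nm : Tm F (C₀ ⊕ ℕ) → (C₀ ⊕ ℕ)) (C1 : Set ℕ) (E' : Set (Eqn F (C₀ ⊕ ℕ))) : Prop :=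
  IsFlattening SA (PhaseI1Sem SA E) nm C1 E'

/- ------------------- Phase II ------------------- -/

/-- The set of constants available after introducing fresh constants
`C2 ⊆ ℕ`: all original constants together with the fresh ones. -/
def SetC (C2 : Set ℕ) : Set (C₀ ⊕ ℕ) :=
  {x | (∃ a : C₀, x = Sum.inl a) ∨ (∃ i ∈ C2, x = Sum.inr i)}

/-- `I(E')` (step 2 of Phase II). -/
def IEset (fG iG : F) (one : γ) (Ei : Set (Eqn F γ)) : Set (Eqn F γ) :=
  {(Tm.app iG [Tm.cst one], Tm.cst one)} ∪
  {e | ∃ m n : γ, (Tm.app iG [Tm.cst m], Tm.cst n) ∈ Ei ∧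
       (e = (Tm.app iG [Tm.cst n], Tm.cst m) ∨
        e = (Tm.app fG [Tm.cst m, Tm.cst n], Tm.cst one) ∨
        e = (Tm.app fG [Tm.cst n, Tm.cst m], Tm.cst one))}

/-- `U(C) = {f(c,1) ≈ c, f(1,c) ≈ c | c ∈ C}`. -/
def UCset (fG : F) (one : γ) (Cs : Set γ) : Set (Eqn F γ) :=
  {e | ∃ c ∈ Cs, e = (Tm.app fG [Tm.cst c, Tm.cst one], Tm.cst c) ∨
                 e = (Tm.app fG [Tm.cst one, Tm.cst c], Tm.cst c)}

/-- Phase II for the group axioms: fresh inverse equations are added for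
the constants lacking them, and `S(E) := E' ∪ I(E') ∪ U(C)`. -/
def IsPhaseIIG (fG iG : F) (one₀ : C₀) (C1 : Set ℕ) (E' : Set (Eqn F (C₀ ⊕ ℕ)))
    (C2 : Set ℕ) (SE : Set (Eqn F (C₀ ⊕ ℕ))) : Prop :=
  C1 ⊆ C2 ∧ C2.Finite ∧
  ∃ Ei : Set (Eqn F (C₀ ⊕ ℕ)), E' ⊆ Ei ∧
    (∀ e ∈ Ei, e ∈ E' ∨ ∃ c ∈ SetC (C₀ := C₀) C2, ∃ m ∈ C2 \ C1,
        e = (Tm.app iG [Tm.cst c], Tm.cst (Sum.inr m))) ∧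
    (∀ c ∈ SetC (C₀ := C₀) C2, c ≠ Sum.inl one₀ →
        ∃ c', (Tm.app iG [Tm.cst c], Tm.cst c') ∈ Ei ∨
              (Tm.app iG [Tm.cst c'], Tm.cst c) ∈ Ei) ∧
    SE = Ei ∪ IEset fG iG (Sum.inl one₀) Ei ∪ UCset fG (Sum.inl one₀) (SetC C2)

/-- Phase II for the monoid axioms: `S(E) := E' ∪ U(C)`. -/
def IsPhaseIIM (fG : F) (one₀ : C₀) (C1 : Set ℕ) (E' SE : Set (Eqn F (C₀ ⊕ ℕ))) : Prop :=
  SE = E' ∪ UCset fG (Sum.inl one₀) (SetC C1)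

/-- Phase II for `n` pairwise disjoint sets of group axioms. -/
def IsPhaseIIMulti (n : ℕ) (fs is_ : Fin n → F) (ones : Fin n → C₀) (C1 : Set ℕ)
    (E' : Set (Eqn F (C₀ ⊕ ℕ))) (C2 : Set ℕ) (SE : Set (Eqn F (C₀ ⊕ ℕ))) : Prop :=
  C1 ⊆ C2 ∧ C2.Finite ∧
  ∃ Ei : Set (Eqn F (C₀ ⊕ ℕ)), E' ⊆ Ei ∧
    (∀ e ∈ Ei, e ∈ E' ∨ ∃ (l : Fin n), ∃ c ∈ SetC (C₀ := C₀) C2, ∃ m ∈ C2 \ C1,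
        e = (Tm.app (is_ l) [Tm.cst c], Tm.cst (Sum.inr m))) ∧
    (∀ (l : Fin n), ∀ c ∈ SetC (C₀ := C₀) C2, c ≠ Sum.inl (ones l) →
        ∃ c', (Tm.app (is_ l) [Tm.cst c], Tm.cst c') ∈ Ei ∨
              (Tm.app (is_ l) [Tm.cst c'], Tm.cst c) ∈ Ei) ∧
    SE = Ei ∪ (⋃ l : Fin n, IEset (fs l) (is_ l) (Sum.inl (ones l)) Ei) ∪
         (⋃ l : Fin n, UCset (fs l) (Sum.inl (ones l)) (SetC C2))

/- -------- Proof complexities and the proof ordering (Def. 3.8) -------- -/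

/-- The complexity of a proof step: a triple of a multiset of terms and two
elements of `Option Tm` (`none` playing the role of `⊥`). -/
abbrev StepCmp (F C₀ : Type) :=
  Multiset (Tm F (C₀ ⊕ ℕ)) × Option (Tm F (C₀ ⊕ ℕ)) × Option (Tm F (C₀ ⊕ ℕ))

/-- Lift of an order to `Option` with `none` (⊥) minimal. -/
def optGT {α : Type*} (r : α → α → Prop) (a b : Option α) : Prop :=
  ∃ x, a = some x ∧ (b = none ∨ ∃ y, b = some y ∧ r x y)

/-- The (Dershowitz–Manna) multiset extension of an order. -/
def MSExt {α : Type*} (r : α → α → Prop) (M N : Multiset α) : Prop :=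
  ∃ M₀ X Y, X ≠ 0 ∧ M = M₀ + X ∧ N = M₀ + Y ∧ ∀ y ∈ Y, ∃ x ∈ X, r x y

/-- Comparison of step complexities: lexicographically, by the multiset
extension of `≻` on the first component and by `≻` (with `⊥` minimal) on
the second and third components. -/
def stepGT (SA : Set F) (prec : C₀ → ℕ) (a b : StepCmp F C₀) : Prop :=
  MSExt (TGT SA prec) a.1 b.1 ∨
  (a.1 = b.1 ∧ (optGT (TGT SA prec) a.2.1 b.2.1 ∨
    (a.2.1 = b.2.1 ∧ optGT (TGT SA prec) a.2.2 b.2.2)))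

/-- `IsProof SA prec S s t M`: there is a proof of `s ≈ t` using equations
of `S` and ground instances of the associativity axioms `gr(A)`, whose
complexity (the multiset of the complexities of its proof steps, per
Definition 3.8) is `M`. -/
inductive IsProof (SA : Set F) (prec : C₀ → ℕ) (S : Set (Eqn F (C₀ ⊕ ℕ))) :
    Tm F (C₀ ⊕ ℕ) → Tm F (C₀ ⊕ ℕ) → Multiset (StepCmp F C₀) → Prop
  | refl : ∀ s, IsProof SA prec S s s 0
  | stepGTc : ∀ {u v s s' t M}, ((u, v) ∈ S ∨ (v, u) ∈ S) → TGT SA prec u v →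
      Repl u v s s' → IsProof SA prec S s' t M →
      IsProof SA prec S s t (({s}, some u, some s') ::ₘ M)
  | stepLTc : ∀ {u v s s' t M}, ((u, v) ∈ S ∨ (v, u) ∈ S) → TGT SA prec v u →
      Repl u v s s' → IsProof SA prec S s' t M →
      IsProof SA prec S s t (({s'}, some v, some s) ::ₘ M)
  | stepEqc : ∀ {u s s' t M}, (u, u) ∈ S →
      Repl u u s s' → IsProof SA prec S s' t M →
      IsProof SA prec S s t (({s, s'}, none, none) ::ₘ M)
  | stepA : ∀ {u v s s' t M}, (ASax SA u v ∨ ASax SA v u) → Ground u →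
      Repl u v s s' → IsProof SA prec S s' t M →
      IsProof SA prec S s t (({s}, none, some s') ::ₘ M)

/- -------- Monoid presentations (Definition 3.17 / Prop. 3.20) -------- -/

/-- `R(E)`: the D-flat and A-flat equations of `S(E) − U(C)` containing the
interpreted associative symbol `fG`. -/
def REset (fG : F) (UC SE : Set (Eqn F γ)) : Set (Eqn F γ) :=
  {e | e ∈ SE \ UC ∧
       ((∃ (u : List γ) (c : γ), 2 ≤ u.length ∧ e = (fS fG u, Tm.cst c)) ∨
        (∃ u v : List γ, 2 ≤ u.length ∧ 2 ≤ v.length ∧ e = (fS fG u, fS fG v)))}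

/-- `C(R)`: the constants appearing in `R(E)`, except the unit. -/
def CRset (one : γ) (RE : Set (Eqn F γ)) : Set γ :=
  {c | c ≠ one ∧ ∃ e ∈ RE, CstIn c e.1 ∨ CstIn c e.2}

/-- The string corresponding to one side of an equation of `R(E)`: the unit
becomes the empty string, any other constant a one-letter string, and a
term `f(u)` the string `u`. -/
def SideStr (fG : F) (one : γ) (t : Tm F γ) (w : List γ) : Prop :=
  (t = Tm.cst one ∧ w = []) ∨ (∃ c, c ≠ one ∧ t = Tm.cst c ∧ w = [c]) ∨
  (∃ u, t = fS fG u ∧ w = u)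

/-- The string relations of the monoid presentation `<C(R) | R(E)>`. -/
def RelOf (fG : F) (one : γ) (RE : Set (Eqn F γ)) : Set (List γ × List γ) :=
  {r | ∃ (u : List γ) (t : Tm F γ) (w : List γ),
        (fS fG u, t) ∈ RE ∧ SideStr fG one t w ∧ r = (u, w)}

/-- The congruence on strings generated by a set of string relations. -/
inductive StrEq (Rel : Set (List γ × List γ)) : List γ → List γ → Prop
  | rel : ∀ {u v} (x y : List γ), (u, v) ∈ Rel → StrEq Rel (x ++ u ++ y) (x ++ v ++ y)
  | refl : ∀ u, StrEq Rel u u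
  | symm : ∀ {u v}, StrEq Rel u v → StrEq Rel v u
  | trans : ∀ {u v w}, StrEq Rel u v → StrEq Rel v w → StrEq Rel u w

/-- The monoid presentation (with generators `X` and string relations `Rel`)
presents a finite group: there are finitely many congruence classes of
strings over `X`, and every string over `X` has a two-sided inverse. -/
def PresentsFiniteGroup (Rel : Set (List γ × List γ)) (X : Set γ) : Prop :=
  (∃ reps : Finset (List γ), ∀ u : List γ, (∀ a ∈ u, a ∈ X) →
      ∃ v ∈ reps, StrEq Rel u v) ∧
  (∀ u : List γ, (∀ a ∈ u, a ∈ X) →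
      ∃ v : List γ, (∀ a ∈ v, a ∈ X) ∧ StrEq Rel (u ++ v) [] ∧ StrEq Rel (v ++ u) [])

/-! ### Evaluation of terms -/

@[elab_as_elim]
theorem Tm.induction {motive : Tm F γ → Prop} (var : ∀ n, motive (.var n))
    (cst : ∀ c, motive (.cst c)) (app : ∀ f ts, (∀ t ∈ ts, motive t) → motive (.app f ts)) :
    ∀ t, motive t
  | .var n => var n
  | .cst c => cst c
  | .app f ts => app f ts fun t _ => Tm.induction var cst app t

@[simp] theorem Tm.subst_var (σ : ℕ → Tm F γ) (n : ℕ) : Tm.subst σ (.var n) = σ n := by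
  rw [Tm.subst]

@[simp] theorem Tm.subst_cst (σ : ℕ → Tm F γ) (c : γ) : Tm.subst σ (.cst c) = .cst c := by
  rw [Tm.subst]

@[simp] theorem Tm.subst_app (σ : ℕ → Tm F γ) (f : F) (ts : List (Tm F γ)) :
    Tm.subst σ (.app f ts) = .app f (ts.map (Tm.subst σ)) := by
  rw [Tm.subst, List.attach_map_val]

section Evaluation

variable {M : Type} {J : F → List M → M} {K : γ → M} {ρ : ℕ → M}

@[simp] theorem evalTm_var (n : ℕ) : evalTm J K ρ (.var n) = ρ n := by
  rw [evalTm]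

@[simp] theorem evalTm_cst (c : γ) : evalTm J K ρ (.cst c) = K c := by
  rw [evalTm]

@[simp] theorem evalTm_app (f : F) (ts : List (Tm F γ)) :
    evalTm J K ρ (.app f ts) = J f (ts.map (evalTm J K ρ)) := by
  rw [evalTm, List.attach_map_val]

theorem evalTm_subst (σ : ℕ → Tm F γ) (t : Tm F γ) :
    evalTm J K ρ (t.subst σ) = evalTm J K (fun n => evalTm J K ρ (σ n)) t := by
  induction t using Tm.induction with
  | var n => simp
  | cst c => simp
  | app f ts ih =>
    simp only [Tm.subst_app, evalTm_app, List.map_map]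
    exact congrArg (J f) (List.map_congr_left ih)

theorem evalTm_eq_of_ctx {r : Tm F γ → Tm F γ → Prop}
    (hr : ∀ s t, r s t → evalTm J K ρ s = evalTm J K ρ t) {s t : Tm F γ} (h : Ctx r s t) :
    evalTm J K ρ s = evalTm J K ρ t := by
  induction h with
  | base hst => exact hr _ _ hst
  | app f us vs _ ih => simp [ih]

/-- The algebra `J` satisfies the variadic associativity axioms for the symbols in `SA`. -/
def IsAssocOn (SA : Set F) (J : F → List M → M) : Prop :=
  ∀ f ∈ SA, ∀ us ws vs : List M, 2 ≤ ws.length → 1 ≤ us.length + vs.length →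
    J f (us ++ J f ws :: vs) = J f (us ++ ws ++ vs)

variable {SA : Set F} {R : Set (Eqn F γ)}

theorem IsAssocOn.evalTm_eq (hJ : IsAssocOn SA J) {s t : Tm F γ} (h : AEq SA s t) :
    evalTm J K ρ s = evalTm J K ρ t := by
  have hax : ∀ s t, ASax SA s t → evalTm J K ρ s = evalTm J K ρ t := by
    rintro _ _ ⟨f, us, ws, vs, hf, hws, hlen, rfl, rfl⟩
    simpa using hJ f hf (us.map (evalTm J K ρ)) (ws.map (evalTm J K ρ)) (vs.map (evalTm J K ρ))
      (by simpa using hws) (by simpa using hlen)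
  induction h with
  | refl => rfl
  | tail _ hst ih =>
    exact ih.trans (hst.elim (evalTm_eq_of_ctx hax) fun h => (evalTm_eq_of_ctx hax h).symm)

theorem IsAssocOn.evalTm_eq_of_rewA (hJ : IsAssocOn SA J)
    (hR : ∀ l r, (l, r) ∈ R → ∀ ρ, evalTm J K ρ l = evalTm J K ρ r) {s t : Tm F γ}
    (h : RewA SA R s t) : evalTm J K ρ s = evalTm J K ρ t := by
  obtain ⟨s', t', hs, hst, ht⟩ := h
  refine (hJ.evalTm_eq hs).trans (.trans (evalTm_eq_of_ctx ?_ hst) (hJ.evalTm_eq ht))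
  rintro _ _ ⟨l, r, σ, hlr, rfl, rfl⟩
  simpa only [evalTm_subst] using hR l r hlr _

end Evaluation

/-! ### Termination -/

section Termination

variable {M : Type} [Preorder M] {J : F → List M → M} {K : γ → M} {SA : Set F} {R : Set (Eqn F γ)}

/-- Every operation of the algebra `J` is strictly increasing in each of its arguments. -/
def IsStrictMonoAlgebra (J : F → List M → M) : Prop :=
  ∀ (f : F) (us vs : List M), StrictMono fun a => J f (us ++ a :: vs)

theorem evalTm_lt_of_rew (hmono : IsStrictMonoAlgebra J)
    (hR : ∀ l r, (l, r) ∈ R → ∀ ρ, evalTm J K ρ r < evalTm J K ρ l) {ρ : ℕ → M} {s t : Tm F γ}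
    (h : Rew R s t) : evalTm J K ρ t < evalTm J K ρ s := by
  induction h with
  | base hst =>
    obtain ⟨l, r, σ, hlr, rfl, rfl⟩ := hst
    simpa only [evalTm_subst] using hR l r hlr _
  | app f us vs _ ih => simpa using hmono f (us.map (evalTm J K ρ)) (vs.map (evalTm J K ρ)) ih

theorem terminatingOn_of_strictMono_algebra [Nonempty M] [WellFoundedLT M] (hJ : IsAssocOn SA J)
    (hmono : IsStrictMonoAlgebra J)
    (hR : ∀ l r, (l, r) ∈ R → ∀ ρ, evalTm J K ρ r < evalTm J K ρ l) (P : Tm F γ → Prop) :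
    TerminatingOn (RewA SA R) P := by
  rintro ⟨g, -, hg⟩
  let ρ : ℕ → M := fun _ => Classical.arbitrary M
  refine not_strictAnti_of_wellFoundedLT (fun n => evalTm J K ρ (g n))
    (strictAnti_nat_of_succ_lt fun n => ?_)
  obtain ⟨s, t, hs, hst, ht⟩ := hg n
  rw [hJ.evalTm_eq hs, ← hJ.evalTm_eq ht]
  exact evalTm_lt_of_rew hmono hR hst

end Termination

open Classical in
/-- A polynomial interpretation of the function symbols over `ℕ`. Shifting the values by `2`,
associative symbols add their arguments and all others add the squares of their arguments:
addition is associative, and `(x + y)² > x² + y²` makes `i(f(x,y))` heavier than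
`f(i(y),i(x))`. -/
noncomputable def weight (SA : Set F) (f : F) (vs : List ℕ) : ℕ :=
  if f ∈ SA then (vs.map (· + 2)).sum - 2 else (vs.map fun v => (v + 2) ^ 2).sum

section Weight

variable {SA : Set F}

theorem isAssocOn_weight : IsAssocOn SA (weight SA) := by
  intro f hf us ws vs hws _
  have hsum : 2 ≤ (ws.map (· + 2)).sum := by
    obtain ⟨w, ws, rfl⟩ := List.exists_cons_of_length_pos (by omega : 0 < ws.length)
    simp only [List.map_cons, List.sum_cons]
    omega
  simp only [weight, if_pos hf, List.map_append, List.map_cons, List.sum_append, List.sum_cons]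
  omega

theorem isStrictMonoAlgebra_weight : IsStrictMonoAlgebra (weight SA) := by
  intro f us vs a b hab
  simp only [weight, List.map_append, List.map_cons, List.sum_append, List.sum_cons]
  split_ifs
  · omega
  · gcongr

theorem evalTm_weight_lt_of_mem_RGrules {f i : F} {one : γ} (hf : f ∈ SA) (hi : i ∉ SA)
    {l r : Tm F γ} (h : (l, r) ∈ RGrules f i one) (ρ : ℕ → ℕ) :
    evalTm (weight SA) 0 ρ r < evalTm (weight SA) 0 ρ l := by
  simp only [RGrules, Set.mem_insert_iff, Set.mem_singleton_iff, Prod.mk.injEq] at h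
  rcases h with ⟨rfl, rfl⟩ | ⟨rfl, rfl⟩ | ⟨rfl, rfl⟩ | ⟨rfl, rfl⟩ | ⟨rfl, rfl⟩ | ⟨rfl, rfl⟩ |
      ⟨rfl, rfl⟩ <;>
    simp only [evalTm_app, evalTm_var, evalTm_cst, weight, if_pos hf, if_neg hi, List.map_cons,
      List.map_nil, List.sum_cons, List.sum_nil, Pi.zero_apply, add_zero, zero_add]
  · norm_num
  · omega
  · omega
  · nlinarith
  · lia
  · lia
  · have hxy : 2 * 2 ≤ (ρ 0 + 2) * (ρ 1 + 2) :=
      Nat.mul_le_mul (Nat.le_add_left _ _) (Nat.le_add_left _ _)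
    rw [Nat.sub_add_cancel (by omega), add_sq']
    lia

end Weight

/-! ### Confluence from a model -/

section Reduction

variable {SA : Set F} {R : Set (Eqn F γ)} {s t u : Tm F γ}

theorem AEq.symm (h : AEq SA s t) : AEq SA t s := by
  induction h with
  | refl => exact .refl
  | tail _ hst ih => exact .head hst.symm ih

theorem AEq.trans (hst : AEq SA s t) (htu : AEq SA t u) : AEq SA s u :=
  Relation.ReflTransGen.trans hst htu

instance : Trans (AEq (F := F) (γ := γ) SA) (AEq SA) (AEq SA) := ⟨AEq.trans⟩

theorem AEq.app (f : F) (us vs : List (Tm F γ)) (h : AEq SA s t) :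
    AEq SA (.app f (us ++ s :: vs)) (.app f (us ++ t :: vs)) :=
  Relation.ReflTransGen.lift (fun s => Tm.app f (us ++ s :: vs))
    (fun _ _ => Or.imp (Ctx.app f us vs) (Ctx.app f us vs)) _ _ h

theorem AEq.assoc {f : F} (hf : f ∈ SA) (us : List (Tm F γ)) {ws : List (Tm F γ)}
    (vs : List (Tm F γ)) (hws : 2 ≤ ws.length) (h : 1 ≤ us.length + vs.length) :
    AEq SA (.app f (us ++ Tm.app f ws :: vs)) (.app f (us ++ ws ++ vs)) :=
  .single (.inl (.base ⟨f, us, ws, vs, hf, hws, h, rfl, rfl⟩))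

theorem RewA.app (f : F) (us vs : List (Tm F γ)) (h : RewA SA R s t) :
    RewA SA R (.app f (us ++ s :: vs)) (.app f (us ++ t :: vs)) := by
  obtain ⟨s', t', hs, hst, ht⟩ := h
  exact ⟨_, _, hs.app f us vs, .app f us vs hst, ht.app f us vs⟩

theorem RewA.of_aeq_left (hst : AEq SA s t) (h : RewA SA R t u) : RewA SA R s u := by
  obtain ⟨t', u', ht, htu, hu⟩ := h
  exact ⟨t', u', hst.trans ht, htu, hu⟩

/-- `s` reduces to `t` modulo `A`: finitely many `R/A`-steps lead from `s` to a term that is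
equal to `t` modulo `A`. -/
def RedA (SA : Set F) (R : Set (Eqn F γ)) (s t : Tm F γ) : Prop :=
  ∃ u, Relation.ReflTransGen (RewA SA R) s u ∧ AEq SA u t

theorem AEq.redA (h : AEq SA s t) : RedA SA R s t := ⟨s, .refl, h⟩

theorem RedA.refl (s : Tm F γ) : RedA SA R s s := ⟨s, .refl, .refl⟩

theorem RedA.rule {l r : Tm F γ} (h : (l, r) ∈ R) (σ : ℕ → Tm F γ) :
    RedA SA R (l.subst σ) (r.subst σ) :=
  ⟨_, .single ⟨_, _, .refl, .base ⟨l, r, σ, h, rfl, rfl⟩, .refl⟩, .refl⟩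

theorem RedA.trans (hst : RedA SA R s t) (htu : RedA SA R t u) : RedA SA R s u := by
  obtain ⟨s', hs, hs't⟩ := hst
  obtain ⟨t', ht, ht'u⟩ := htu
  obtain rfl | ⟨v, htv, hv⟩ := ht.cases_head
  · exact ⟨s', hs, hs't.trans ht'u⟩
  · exact ⟨t', (hs.tail (htv.of_aeq_left hs't)).trans hv, ht'u⟩

instance : Trans (RedA (F := F) (γ := γ) SA R) (RedA SA R) (RedA SA R) := ⟨RedA.trans⟩

theorem RedA.app (f : F) (us vs : List (Tm F γ)) (h : RedA SA R s t) :
    RedA SA R (.app f (us ++ s :: vs)) (.app f (us ++ t :: vs)) := by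
  obtain ⟨u, hsu, hut⟩ := h
  exact ⟨_, Relation.ReflTransGen.lift (fun s => Tm.app f (us ++ s :: vs))
    (fun _ _ => RewA.app f us vs) _ _ hsu, hut.app f us vs⟩

theorem RedA.app_map (f : F) {h : Tm F γ → Tm F γ} {ts : List (Tm F γ)}
    (hts : ∀ t ∈ ts, RedA SA R t (h t)) : RedA SA R (.app f ts) (.app f (ts.map h)) := by
  suffices hprefix : ∀ us, RedA SA R (.app f (us ++ ts)) (.app f (us ++ ts.map h)) from
    hprefix []
  induction ts with
  | nil => exact fun us => .refl _
  | cons t ts ih =>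
    intro us
    have htail := ih (fun t ht => hts t (List.mem_cons_of_mem _ ht)) (us ++ [h t])
    simp only [List.append_assoc, List.cons_append, List.nil_append] at htail
    exact ((hts t List.mem_cons_self).app f us ts).trans htail

theorem confluentModAOn_of_model {M : Type} {J : F → List M → M} {K : γ → M} {ρ : ℕ → M}
    (rep : M → Tm F γ) (hJ : IsAssocOn SA J)
    (hR : ∀ l r, (l, r) ∈ R → ∀ ρ, evalTm J K ρ l = evalTm J K ρ r)
    (hvar : ∀ n, RedA SA R (.var n) (rep (ρ n))) (hcst : ∀ c, RedA SA R (.cst c) (rep (K c)))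
    (happ : ∀ f us, RedA SA R (.app f (us.map rep)) (rep (J f us))) (P : Tm F γ → Prop) :
    ConfluentModAOn SA R P := by
  have hred : ∀ t, RedA SA R t (rep (evalTm J K ρ t)) := fun t => by
    induction t using Tm.induction with
    | var n => simpa using hvar n
    | cst c => simpa using hcst c
    | app f ts ih =>
      have h := happ f (ts.map (evalTm J K ρ))
      rw [List.map_map] at h
      simpa using (RedA.app_map f ih).trans h
  have hinv : ∀ {s t}, Relation.ReflTransGen (RewA SA R) s t →
      evalTm J K ρ s = evalTm J K ρ t := fun h => by
    induction h with
    | refl => rfl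
    | tail _ hst ih => exact ih.trans (hJ.evalTm_eq_of_rewA hR hst)
  intro a b c _ _ _ hab hac
  obtain ⟨u, hbu, hu⟩ := hred b
  obtain ⟨v, hcv, hv⟩ := hred c
  rw [← hinv hab, hinv hac] at hu
  exact ⟨u, v, hbu, hcv, hu.trans hv.symm⟩

end Reduction

/-! ### Flattening a single associative symbol -/

section Strings

variable {SA : Set F} {f : F}

/-- The term `f(w)` with argument string `w`, where a one-letter string stands for its letter
(compare `fbar`, the case of a string of constants). -/
def joinTm (f : F) : List (Tm F γ) → Tm F γ
  | [x] => x
  | w => .app f w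

theorem joinTm_of_two_le {w : List (Tm F γ)} (hw : 2 ≤ w.length) : joinTm f w = .app f w := by
  match w, hw with
  | _ :: _ :: _, _ => rfl

theorem AEq.splice (hf : f ∈ SA) (us : List (Tm F γ)) {w : List (Tm F γ)} (vs : List (Tm F γ))
    (hw : w ≠ []) (hlen : 1 ≤ us.length + vs.length) :
    AEq SA (.app f (us ++ joinTm f w :: vs)) (.app f (us ++ w ++ vs)) := by
  match w, hw with
  | [x], _ => simpa [joinTm] using .refl
  | x :: y :: w, _ => exact .assoc hf us vs (by simp) hlen

theorem AEq.splice_flatten (hf : f ∈ SA) (us : List (Tm F γ)) {ws : List (List (Tm F γ))}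
    (hne : ∀ w ∈ ws, w ≠ []) (hlen : 2 ≤ us.length + ws.length) :
    AEq SA (.app f (us ++ ws.map (joinTm f))) (.app f (us ++ ws.flatten)) := by
  induction ws generalizing us with
  | nil => exact .refl
  | cons w ws ih =>
    have hw : w ≠ [] := hne w List.mem_cons_self
    have hwlen := List.length_pos_iff.2 hw
    rw [List.length_cons] at hlen
    rw [List.map_cons, List.flatten_cons, ← List.append_assoc]
    exact (AEq.splice hf us _ hw (by rw [List.length_map]; omega)).trans
      (ih (us ++ w) (fun w hw => hne w (List.mem_cons_of_mem _ hw))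
        (by rw [List.length_append]; omega))

theorem AEq.joinTm_flatten (hf : f ∈ SA) {ws : List (List (Tm F γ))} (hne : ∀ w ∈ ws, w ≠ [])
    (hlen : 2 ≤ ws.length) : AEq SA (.app f (ws.map (joinTm f))) (joinTm f ws.flatten) := by
  have hflat : 2 ≤ ws.flatten.length := by
    rw [List.length_flatten]
    refine (hlen.trans_eq (List.length_map _).symm).trans (List.length_le_sum_of_one_le _ ?_)
    simpa [Nat.one_le_iff_ne_zero] using hne
  rw [joinTm_of_two_le hflat]
  exact .splice_flatten hf [] hne (by simpa using hlen)

theorem AEq.joinTm_append (hf : f ∈ SA) {v w : List (Tm F γ)} (hv : v ≠ []) (hw : w ≠ []) :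
    AEq SA (.app f [joinTm f v, joinTm f w]) (joinTm f (v ++ w)) := by
  simpa using AEq.joinTm_flatten hf (ws := [v, w]) (by simp [hv, hw]) le_rfl

open Classical in
/-- The string of maximal subterms of a term that are not `f`-applications to at least two
arguments. -/
noncomputable def argString (f : F) : Tm F γ → List (Tm F γ)
  | .var n => [.var n]
  | .cst c => [.cst c]
  | .app g ts =>
    if g = f ∧ 2 ≤ ts.length then (ts.attach.map fun t => argString f t.1).flatten
    else [.app g ts]
decreasing_by
  have := List.sizeOf_lt_of_mem t.2
  simp only [Tm.app.sizeOf_spec]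
  omega

theorem argString_app {ts : List (Tm F γ)} (h : 2 ≤ ts.length) :
    argString f (.app f ts) = (ts.map (argString f)).flatten := by
  rw [argString, if_pos ⟨rfl, h⟩, List.attach_map_val]

theorem argString_app_of_not {g : F} {ts : List (Tm F γ)} (h : ¬(g = f ∧ 2 ≤ ts.length)) :
    argString f (.app g ts) = [.app g ts] := by
  rw [argString, if_neg h]

@[elab_as_elim]
theorem argString_induction {motive : Tm F γ → Prop}
    (letter : ∀ t, argString f t = [t] → motive t)
    (app : ∀ ts, 2 ≤ ts.length → (∀ t ∈ ts, motive t) → motive (.app f ts)) (t : Tm F γ) :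
    motive t := by
  induction t using Tm.induction with
  | var n => exact letter _ (by rw [argString])
  | cst c => exact letter _ (by rw [argString])
  | app g ts ih =>
    by_cases h : g = f ∧ 2 ≤ ts.length
    · obtain ⟨rfl, h⟩ := h
      exact app ts h ih
    · exact letter _ (argString_app_of_not h)

theorem argString_ne_nil (t : Tm F γ) : argString f t ≠ [] := by
  induction t using argString_induction (f := f) with
  | letter t h => simp [h]
  | app ts h ih =>
    obtain ⟨t, ts, rfl⟩ := List.exists_cons_of_length_pos (by omega : 0 < ts.length)
    simp [argString_app h, ih t List.mem_cons_self]

theorem argSub_of_mem_argString {x t : Tm F γ} (hx : x ∈ argString f t) : ArgSub x t := by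
  induction t using argString_induction (f := f) with
  | letter t h =>
    rw [h, List.mem_singleton] at hx
    exact hx ▸ .refl t
  | app ts h ih =>
    rw [argString_app h, ← List.flatMap_def, List.mem_flatMap] at hx
    obtain ⟨t, ht, hx⟩ := hx
    exact .arg (ih t ht hx) ht

theorem argString_of_mem_argString {x t : Tm F γ} (hx : x ∈ argString f t) :
    argString f x = [x] := by
  induction t using argString_induction (f := f) with
  | letter t h =>
    rw [h, List.mem_singleton] at hx
    exact hx ▸ h
  | app ts h ih =>
    rw [argString_app h, ← List.flatMap_def, List.mem_flatMap] at hx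
    obtain ⟨t, ht, hx⟩ := hx
    exact ih t ht hx

theorem argString_joinTm {w : List (Tm F γ)} (hne : w ≠ []) (hw : ∀ x ∈ w, argString f x = [x]) :
    argString f (joinTm f w) = w := by
  match w, hne with
  | [x], _ => exact hw x List.mem_cons_self
  | x :: y :: w, _ =>
    rw [joinTm, argString_app (by simp), List.map_congr_left hw, ← List.flatMap_def,
      List.flatMap_singleton']
    simp

/-- The term obtained by flattening the applications of the single symbol `f` at the root. -/
noncomputable def flattenRoot (f : F) (t : Tm F γ) : Tm F γ := joinTm f (argString f t)

theorem argString_flattenRoot (t : Tm F γ) : argString f (flattenRoot f t) = argString f t :=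
  argString_joinTm (argString_ne_nil t) fun _ => argString_of_mem_argString

theorem flattenRoot_flattenRoot (t : Tm F γ) :
    flattenRoot f (flattenRoot f t) = flattenRoot f t := by
  rw [flattenRoot, argString_flattenRoot, flattenRoot]

theorem redA_flattenRoot (R : Set (Eqn F γ)) (hf : f ∈ SA) (t : Tm F γ) :
    RedA SA R t (flattenRoot f t) := by
  induction t using argString_induction (f := f) with
  | letter t h =>
    rw [flattenRoot, h]
    exact .refl t
  | app ts h ih =>
    have hflat := AEq.joinTm_flatten hf (ws := ts.map (argString f))
      (by simp [argString_ne_nil]) (by simpa using h)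
    rw [List.map_map, ← argString_app h] at hflat
    exact (RedA.app_map f ih).trans hflat.redA

end Strings

/-! ### Normal forms for a single group -/

open Subgroup in
theorem letter_mem_of_mem_closure {α : Type*} [DecidableEq α] {S : Set α} {g : FreeGroup α}
    (hg : g ∈ closure (FreeGroup.of '' S)) : ∀ x ∈ g.toWord, x.1 ∈ S := by
  induction hg using closure_induction with
  | mem g hg =>
    obtain ⟨a, ha, rfl⟩ := hg
    simpa using ha
  | one => simp
  | mul g h _ _ ihg ihh =>
    intro x hx
    exact (List.mem_append.1 ((FreeGroup.toWord_mul_sublist g h).subset hx)).elim (ihg x) (ihh x)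
  | inv g _ ih =>
    intro x hx
    rw [FreeGroup.toWord_inv, FreeGroup.invRev, List.mem_reverse, List.mem_map] at hx
    obtain ⟨y, hy, rfl⟩ := hx
    exact ih y hy

/-- The interpreted symbols of a set of group axioms: multiplication `f_G`, inverse `i_G` and
unit `1_G`. -/
structure GroupSig (F γ : Type) where
  mul : F
  inv : F
  one : γ

namespace GroupSig

variable (G : GroupSig F γ)

/-- The term `x` or `i(x)` of a signed letter, the sign `true` being the positive one, as in
`FreeGroup`. -/
def ofLetter (x : Tm F γ × Bool) : Tm F γ := if x.2 then x.1 else .app G.inv [x.1]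

/-- The term of a word in signed letters; the empty word stands for the unit. -/
def ofWord : List (Tm F γ × Bool) → Tm F γ
  | [] => .cst G.one
  | x :: w => joinTm G.mul ((x :: w).map G.ofLetter)

open Classical in
/-- The value of a term in the free group on terms, where every maximal subterm that is not
built by the group operations counts as a generator. So do applications of the multiplication
to fewer than two arguments, and of the inverse to a number of arguments other than one. -/
noncomputable def value : Tm F γ → FreeGroup (Tm F γ)
  | .var n => FreeGroup.of (.var n)
  | .cst c => if c = G.one then 1 else FreeGroup.of (.cst c)
  | .app f ts =>
    if f = G.mul ∧ 2 ≤ ts.length then (ts.attach.map fun t => value t.1).prod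
    else if f = G.inv ∧ ts.length = 1 then ((ts.attach.map fun t => value t.1).prod)⁻¹
    else FreeGroup.of (.app f ts)
decreasing_by
  all_goals
    have := List.sizeOf_lt_of_mem t.2
    simp only [Tm.app.sizeOf_spec]
    omega

/-- A term alien to the group: it is a generator in its own right. -/
def Alien (t : Tm F γ) : Prop := G.value t = FreeGroup.of t

open Classical in
/-- The term spelling the reduced word of an element of the free group. -/
noncomputable def read (g : FreeGroup (Tm F γ)) : Tm F γ := G.ofWord g.toWord

/-- The normal form of a term with respect to one group, its alien subterms being left
untouched. -/
noncomputable def norm (t : Tm F γ) : Tm F γ := G.read (G.value t)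

variable {G}

theorem value_mul {ts : List (Tm F γ)} (h : 2 ≤ ts.length) :
    G.value (.app G.mul ts) = (ts.map G.value).prod := by
  rw [value, if_pos ⟨rfl, h⟩, List.attach_map_val]

theorem value_inv (t : Tm F γ) : G.value (.app G.inv [t]) = (G.value t)⁻¹ := by
  rw [value, if_neg (by simp), if_pos (by simp)]
  simp

theorem value_one : G.value (.cst G.one) = 1 := by
  rw [value, if_pos rfl]

theorem alien_var (n : ℕ) : G.Alien (.var n) := by
  rw [Alien, value]

theorem alien_cst {c : γ} (h : c ≠ G.one) : G.Alien (.cst c) := by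
  rw [Alien, value, if_neg h]

theorem alien_app {f : F} {ts : List (Tm F γ)} (hmul : ¬(f = G.mul ∧ 2 ≤ ts.length))
    (hinv : ¬(f = G.inv ∧ ts.length = 1)) : G.Alien (.app f ts) := by
  rw [Alien, value, if_neg hmul, if_neg hinv]

theorem alien_or_value_mem (f : F) {ts : List (Tm F γ)} {H : Subgroup (FreeGroup (Tm F γ))}
    (hts : ∀ t ∈ ts, G.value t ∈ H) : G.Alien (.app f ts) ∨ G.value (.app f ts) ∈ H := by
  by_cases hmul : f = G.mul ∧ 2 ≤ ts.length
  · obtain ⟨rfl, h⟩ := hmul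
    rw [value_mul h]
    exact .inr (H.list_prod_mem (by simpa using hts))
  by_cases hinv : f = G.inv ∧ ts.length = 1
  · obtain ⟨rfl, h⟩ := hinv
    obtain ⟨t, rfl⟩ := List.length_eq_one_iff.1 h
    rw [value_inv]
    exact .inr (H.inv_mem (hts t List.mem_cons_self))
  · exact .inl (alien_app hmul hinv)

@[elab_as_elim]
theorem induction {motive : Tm F γ → Prop} (alien : ∀ t, G.Alien t → motive t)
    (one : motive (.cst G.one))
    (mul : ∀ ts, 2 ≤ ts.length → (∀ t ∈ ts, motive t) → motive (.app G.mul ts))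
    (inv : ∀ t, motive t → motive (.app G.inv [t])) (t : Tm F γ) : motive t := by
  induction t using Tm.induction with
  | var n => exact alien _ (alien_var n)
  | cst c =>
    by_cases h : c = G.one
    · exact h ▸ one
    · exact alien _ (alien_cst h)
  | app f ts ih =>
    by_cases hmul : f = G.mul ∧ 2 ≤ ts.length
    · obtain ⟨rfl, h⟩ := hmul
      exact mul ts h ih
    by_cases hinv : f = G.inv ∧ ts.length = 1
    · obtain ⟨rfl, h⟩ := hinv
      obtain ⟨t, rfl⟩ := List.length_eq_one_iff.1 h
      exact inv t (ih t List.mem_cons_self)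
    · exact alien _ (alien_app hmul hinv)

theorem value_mem_closure (t : Tm F γ) :
    G.value t ∈ Subgroup.closure (FreeGroup.of '' {x | ArgSub x t ∧ G.Alien x}) := by
  have hsub : ∀ {f u ts}, u ∈ ts →
      Subgroup.closure (FreeGroup.of '' {x : Tm F γ | ArgSub x u ∧ G.Alien x}) ≤
        Subgroup.closure (FreeGroup.of '' {x | ArgSub x (.app f ts) ∧ G.Alien x}) :=
    fun hu => Subgroup.closure_mono (Set.image_mono fun _ hx => ⟨.arg hx.1 hu, hx.2⟩)
  induction t using GroupSig.induction (G := G) with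
  | alien t h =>
    rw [h]
    exact Subgroup.subset_closure ⟨t, ⟨.refl t, h⟩, rfl⟩
  | one => exact value_one (G := G) ▸ one_mem _
  | mul ts h ih =>
    rw [value_mul h]
    refine Subgroup.list_prod_mem _ (List.forall_mem_map.2 fun t ht => hsub ht (ih t ht))
  | inv t ih =>
    rw [value_inv]
    exact inv_mem (hsub List.mem_cons_self ih)

theorem value_ofLetter {x : Tm F γ × Bool} (h : G.Alien x.1) :
    G.value (G.ofLetter x) = FreeGroup.mk [x] := by
  obtain ⟨a, _ | _⟩ := x
  · rw [ofLetter, if_neg (by simp), value_inv, h]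
    rfl
  · exact h

theorem value_ofWord {w : List (Tm F γ × Bool)} (h : ∀ x ∈ w, G.Alien x.1) :
    G.value (G.ofWord w) = FreeGroup.mk w := by
  have hprod : (w.map (G.value ∘ G.ofLetter)).prod = FreeGroup.mk w := by
    induction w with
    | nil => rfl
    | cons x w ih =>
      rw [List.map_cons, List.prod_cons, ih fun y hy => h y (List.mem_cons_of_mem _ hy),
        Function.comp_apply, value_ofLetter (h x List.mem_cons_self), FreeGroup.mul_mk]
      rfl
  match w with
  | [] => exact value_one
  | [x] => exact value_ofLetter (h x List.mem_cons_self)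
  | x :: y :: w =>
    rw [ofWord, joinTm_of_two_le (by simp), value_mul (by simp), List.map_map, hprod]

theorem value_read {g : FreeGroup (Tm F γ)}
    (hg : g ∈ Subgroup.closure (FreeGroup.of '' {x | G.Alien x})) : G.value (G.read g) = g := by
  classical
  rw [read, value_ofWord (letter_mem_of_mem_closure hg), FreeGroup.mk_toWord]

@[simp] theorem value_norm (t : Tm F γ) : G.value (G.norm t) = G.value t :=
  value_read (Subgroup.closure_mono (Set.image_mono fun _ hx => hx.2) (value_mem_closure t))

theorem norm_congr {s t : Tm F γ} (h : G.value s = G.value t) : G.norm s = G.norm t :=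
  congrArg G.read h

theorem Alien.norm_eq {t : Tm F γ} (h : G.Alien t) : G.norm t = t := by
  classical
  rw [norm, h, read, FreeGroup.toWord_of]
  rfl

theorem norm_one : G.norm (.cst G.one) = .cst G.one := by
  classical
  rw [norm, value_one, read, FreeGroup.toWord_one]
  rfl

section Reduction

variable {SA : Set F} {R : Set (Eqn F γ)}

theorem redA_one_mul (hR : RGrules G.mul G.inv G.one ⊆ R) (t : Tm F γ) :
    RedA SA R (.app G.mul [.cst G.one, t]) t := by
  simpa using RedA.rule (l := .app G.mul [.cst G.one, .var 0]) (r := .var 0)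
    (hR (by simp [RGrules])) fun _ => t

theorem redA_mul_one (hR : RGrules G.mul G.inv G.one ⊆ R) (t : Tm F γ) :
    RedA SA R (.app G.mul [t, .cst G.one]) t := by
  simpa using RedA.rule (l := .app G.mul [.var 0, .cst G.one]) (r := .var 0)
    (hR (by simp [RGrules])) fun _ => t

theorem redA_inv_one (hR : RGrules G.mul G.inv G.one ⊆ R) :
    RedA SA R (.app G.inv [.cst G.one]) (.cst G.one) := by
  simpa using RedA.rule (l := .app G.inv [.cst G.one]) (r := .cst G.one)
    (hR (by simp [RGrules])) Tm.var

theorem redA_inv_inv (hR : RGrules G.mul G.inv G.one ⊆ R) (t : Tm F γ) :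
    RedA SA R (.app G.inv [.app G.inv [t]]) t := by
  simpa using RedA.rule (l := .app G.inv [.app G.inv [.var 0]]) (r := .var 0)
    (hR (by simp [RGrules])) fun _ => t

theorem redA_mul_inv_cancel (hR : RGrules G.mul G.inv G.one ⊆ R) (t : Tm F γ) :
    RedA SA R (.app G.mul [t, .app G.inv [t]]) (.cst G.one) := by
  simpa using RedA.rule (l := .app G.mul [.var 0, .app G.inv [.var 0]]) (r := .cst G.one)
    (hR (by simp [RGrules])) fun _ => t

theorem redA_inv_mul_cancel (hR : RGrules G.mul G.inv G.one ⊆ R) (t : Tm F γ) :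
    RedA SA R (.app G.mul [.app G.inv [t], t]) (.cst G.one) := by
  simpa using RedA.rule (l := .app G.mul [.app G.inv [.var 0], .var 0]) (r := .cst G.one)
    (hR (by simp [RGrules])) fun _ => t

theorem redA_mul_inv_rev (hR : RGrules G.mul G.inv G.one ⊆ R) (s t : Tm F γ) :
    RedA SA R (.app G.inv [.app G.mul [s, t]]) (.app G.mul [.app G.inv [t], .app G.inv [s]]) := by
  simpa using RedA.rule (l := .app G.inv [.app G.mul [.var 0, .var 1]])
    (r := .app G.mul [.app G.inv [.var 1], .app G.inv [.var 0]])
    (hR (by simp [RGrules])) fun n => if n = 0 then s else t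

theorem aeq_ofWord_append (hmul : G.mul ∈ SA) {v w : List (Tm F γ × Bool)} (hv : v ≠ [])
    (hw : w ≠ []) : AEq SA (.app G.mul [G.ofWord v, G.ofWord w]) (G.ofWord (v ++ w)) := by
  match v, w, hv, hw with
  | x :: v, y :: w, _, _ =>
    simpa [ofWord] using AEq.joinTm_append hmul (v := (x :: v).map G.ofLetter)
      (w := (y :: w).map G.ofLetter) (by simp) (by simp)

theorem redA_ofWord_append (hmul : G.mul ∈ SA) (hR : RGrules G.mul G.inv G.one ⊆ R)
    (v w : List (Tm F γ × Bool)) :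
    RedA SA R (.app G.mul [G.ofWord v, G.ofWord w]) (G.ofWord (v ++ w)) := by
  rcases eq_or_ne v [] with rfl | hv
  · exact redA_one_mul hR _
  rcases eq_or_ne w [] with rfl | hw
  · simpa [ofWord] using redA_mul_one hR _
  exact (aeq_ofWord_append hmul hv hw).redA

theorem redA_ofWord_of_red_step (hmul : G.mul ∈ SA) (hR : RGrules G.mul G.inv G.one ⊆ R)
    {v w : List (Tm F γ × Bool)} (h : FreeGroup.Red.Step v w) :
    RedA SA R (G.ofWord v) (G.ofWord w) := by
  obtain @⟨L₁, L₂, a, b⟩ := h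
  have hcancel : RedA SA R (G.ofWord [(a, b), (a, !b)]) (.cst G.one) := by
    cases b
    · exact redA_inv_mul_cancel hR a
    · exact redA_mul_inv_cancel hR a
  induction L₁ with
  | nil =>
    rcases eq_or_ne L₂ [] with rfl | h
    · exact hcancel
    calc RedA SA R (G.ofWord ([(a, b), (a, !b)] ++ L₂))
          (.app G.mul [G.ofWord [(a, b), (a, !b)], G.ofWord L₂]) :=
          (aeq_ofWord_append hmul (by simp) h).symm.redA
      RedA SA R _ (.app G.mul [.cst G.one, G.ofWord L₂]) := hcancel.app G.mul [] [G.ofWord L₂]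
      RedA SA R _ (G.ofWord L₂) := redA_one_mul hR _
  | cons x L₁ ih =>
    calc RedA SA R (G.ofWord ([x] ++ (L₁ ++ (a, b) :: (a, !b) :: L₂)))
          (.app G.mul [G.ofWord [x], G.ofWord (L₁ ++ (a, b) :: (a, !b) :: L₂)]) :=
          (aeq_ofWord_append hmul (by simp) (by simp)).symm.redA
      RedA SA R _ (.app G.mul [G.ofWord [x], G.ofWord (L₁ ++ L₂)]) := ih.app G.mul [G.ofWord [x]] []
      RedA SA R _ (G.ofWord ([x] ++ (L₁ ++ L₂))) := redA_ofWord_append hmul hR _ _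

theorem redA_ofWord_of_red (hmul : G.mul ∈ SA) (hR : RGrules G.mul G.inv G.one ⊆ R)
    {v w : List (Tm F γ × Bool)} (h : FreeGroup.Red v w) :
    RedA SA R (G.ofWord v) (G.ofWord w) := by
  induction h with
  | refl => exact .refl _
  | tail _ hstep ih => exact ih.trans (redA_ofWord_of_red_step hmul hR hstep)

theorem redA_read_mul (hmul : G.mul ∈ SA) (hR : RGrules G.mul G.inv G.one ⊆ R)
    (g h : FreeGroup (Tm F γ)) :
    RedA SA R (.app G.mul [G.read g, G.read h]) (G.read (g * h)) := by
  classical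
  rw [read, read, read, FreeGroup.toWord_mul]
  exact (redA_ofWord_append hmul hR _ _).trans (redA_ofWord_of_red hmul hR FreeGroup.reduce.red)

theorem redA_read_prod (hmul : G.mul ∈ SA) (hR : RGrules G.mul G.inv G.one ⊆ R)
    {gs : List (FreeGroup (Tm F γ))} (hlen : 2 ≤ gs.length) :
    RedA SA R (.app G.mul (gs.map G.read)) (G.read gs.prod) := by
  induction gs with
  | nil => simp at hlen
  | cons g gs ih =>
    match gs, hlen with
    | [h], _ => simpa using redA_read_mul hmul hR g h
    | h :: k :: gs, _ =>
      calc RedA SA R (.app G.mul ((g :: h :: k :: gs).map G.read))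
            (.app G.mul [G.read g, .app G.mul ((h :: k :: gs).map G.read)]) := by
            simpa using (AEq.assoc hmul [G.read g] (ws := (h :: k :: gs).map G.read) []
              (by simp) (by simp)).symm.redA
        RedA SA R _ (.app G.mul [G.read g, G.read (h :: k :: gs).prod]) :=
            (ih (by simp)).app G.mul [G.read g] []
        RedA SA R _ (G.read (g * (h :: k :: gs).prod)) := redA_read_mul hmul hR _ _

theorem redA_inv_ofWord (hmul : G.mul ∈ SA) (hR : RGrules G.mul G.inv G.one ⊆ R)
    (w : List (Tm F γ × Bool)) :
    RedA SA R (.app G.inv [G.ofWord w]) (G.ofWord (FreeGroup.invRev w)) := by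
  induction w with
  | nil => exact redA_inv_one hR
  | cons x w ih =>
    have hletter : RedA SA R (.app G.inv [G.ofWord [x]]) (G.ofWord [(x.1, !x.2)]) := by
      obtain ⟨a, _ | _⟩ := x
      · exact redA_inv_inv hR a
      · exact .refl _
    rcases eq_or_ne w [] with rfl | hw
    · exact hletter
    rw [FreeGroup.invRev_cons]
    calc RedA SA R (.app G.inv [G.ofWord ([x] ++ w)])
          (.app G.inv [.app G.mul [G.ofWord [x], G.ofWord w]]) :=
          (aeq_ofWord_append hmul (by simp) hw).symm.redA.app G.inv [] []
      RedA SA R _ (.app G.mul [.app G.inv [G.ofWord w], .app G.inv [G.ofWord [x]]]) :=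
          redA_mul_inv_rev hR _ _
      RedA SA R _ (.app G.mul [G.ofWord (FreeGroup.invRev w), .app G.inv [G.ofWord [x]]]) :=
          ih.app G.mul [] _
      RedA SA R _ (.app G.mul [G.ofWord (FreeGroup.invRev w), G.ofWord [(x.1, !x.2)]]) :=
          hletter.app G.mul [_] []
      RedA SA R _ (G.ofWord (FreeGroup.invRev w ++ [(x.1, !x.2)])) := redA_ofWord_append hmul hR _ _

theorem redA_norm (hmul : G.mul ∈ SA) (hR : RGrules G.mul G.inv G.one ⊆ R) (t : Tm F γ) :
    RedA SA R t (G.norm t) := by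
  classical
  induction t using GroupSig.induction (G := G) with
  | alien t h =>
    rw [h.norm_eq]
    exact .refl t
  | one =>
    rw [norm_one]
    exact .refl _
  | mul ts h ih =>
    have hprod := redA_read_prod hmul hR (gs := ts.map G.value) (by simpa using h)
    rw [List.map_map] at hprod
    rw [norm, value_mul h]
    exact (RedA.app_map G.mul ih).trans hprod
  | inv t ih =>
    rw [norm, value_inv, read, FreeGroup.toWord_inv]
    exact (ih.app G.inv [] []).trans (redA_inv_ofWord hmul hR _)

end Reduction

end GroupSig

/-! ### Disjoint groups -/

/-- The symbol conditions on a family of groups: the multiplications are associative symbols, the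
inverses are not, and different groups have different multiplications and inverses. -/
structure IsGroupFamily {ι : Type*} (SA : Set F) (G : ι → GroupSig F γ) : Prop where
  mul_mem : ∀ l, (G l).mul ∈ SA
  inv_notMem : ∀ l, (G l).inv ∉ SA
  mul_injective : Function.Injective fun l => (G l).mul
  inv_injective : Function.Injective fun l => (G l).inv

open Classical in
/-- The operation of the symbol `f` on normal terms: apply `f`, then take the normal form in the
group that owns `f`, if there is one, and otherwise flatten at the root if `f` is associative. -/
noncomputable def normApp {ι : Type*} (SA : Set F) (G : ι → GroupSig F γ) (f : F)
    (ts : List (Tm F γ)) : Tm F γ :=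
  if h : ∃ l, f = (G l).mul ∨ f = (G l).inv then (G h.choose).norm (.app f ts)
  else if f ∈ SA then flattenRoot f (.app f ts)
  else .app f ts

/-- Normal terms: `normApp` leaves each of their applications `f(ts)` as it is. -/
inductive IsNormal {ι : Type*} (SA : Set F) (G : ι → GroupSig F γ) : Tm F γ → Prop
  | var (n : ℕ) : IsNormal SA G (.var n)
  | cst (c : γ) : IsNormal SA G (.cst c)
  | app {f : F} {ts : List (Tm F γ)} (hts : ∀ t ∈ ts, IsNormal SA G t)
      (h : normApp SA G f ts = .app f ts) : IsNormal SA G (.app f ts)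

section Family

variable {ι : Type*} {SA : Set F} {G : ι → GroupSig F γ}

theorem IsNormal.of_argSub {s t : Tm F γ} (ht : IsNormal SA G t) (h : ArgSub s t) :
    IsNormal SA G s := by
  induction h with
  | refl => exact ht
  | arg _ hu ih =>
    cases ht with
    | app hts _ => exact ih (hts _ hu)

theorem isNormal_normApp_of_eq_flattenRoot {f : F} {ts : List (Tm F γ)}
    (h : ∀ ts, normApp SA G f ts = flattenRoot f (.app f ts))
    (hts : ∀ t ∈ ts, IsNormal SA G t) : IsNormal SA G (normApp SA G f ts) := by
  have hfix := flattenRoot_flattenRoot (f := f) (.app f ts)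
  rw [h]
  by_cases hlen : 2 ≤ ts.length
  · have hletter : ∀ x ∈ argString f (.app f ts), IsNormal SA G x := by
      rw [argString_app hlen]
      simp only [List.mem_flatten, List.mem_map]
      rintro x ⟨_, ⟨t, ht, rfl⟩, hx⟩
      exact (hts t ht).of_argSub (argSub_of_mem_argString hx)
    rw [flattenRoot.eq_def f (.app f ts)] at hfix ⊢
    match argString f (.app f ts), argString_ne_nil (f := f) (.app f ts), hletter, hfix with
    | [x], _, hletter, _ => exact hletter x List.mem_cons_self
    | x :: y :: w, _, hletter, hfix => exact .app hletter ((h _).trans hfix)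
  · have hflat : flattenRoot f (.app f ts) = .app f ts := by
      rw [flattenRoot, argString_app_of_not (hlen ·.2), joinTm]
    rw [hflat]
    exact .app hts ((h ts).trans hflat)

namespace IsGroupFamily

theorem normApp_mul (hG : IsGroupFamily SA G) (l : ι) (ts : List (Tm F γ)) :
    normApp SA G (G l).mul ts = (G l).norm (.app (G l).mul ts) := by
  have h : ∃ m, (G l).mul = (G m).mul ∨ (G l).mul = (G m).inv := ⟨l, .inl rfl⟩
  have hl : h.choose = l := h.choose_spec.elim (fun h => (hG.mul_injective h).symm)
    fun h => absurd (h ▸ hG.mul_mem l) (hG.inv_notMem _)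
  rw [normApp, dif_pos h, hl]

theorem normApp_inv (hG : IsGroupFamily SA G) (l : ι) (ts : List (Tm F γ)) :
    normApp SA G (G l).inv ts = (G l).norm (.app (G l).inv ts) := by
  have h : ∃ m, (G l).inv = (G m).mul ∨ (G l).inv = (G m).inv := ⟨l, .inr rfl⟩
  have hl : h.choose = l := h.choose_spec.elim
    (fun h => absurd (h ▸ hG.mul_mem _) (hG.inv_notMem l)) fun h => (hG.inv_injective h).symm
  rw [normApp, dif_pos h, hl]

theorem normApp_cases (hG : IsGroupFamily SA G) (f : F) :
    (∃ l, (f = (G l).mul ∨ f = (G l).inv) ∧ ∀ ts, normApp SA G f ts = (G l).norm (.app f ts)) ∨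
      (f ∈ SA ∧ ∀ ts, normApp SA G f ts = flattenRoot f (.app f ts)) ∨
      (f ∉ SA ∧ ∀ ts, normApp SA G f ts = .app f ts) := by
  by_cases h : ∃ l, f = (G l).mul ∨ f = (G l).inv
  · obtain ⟨l, rfl | rfl⟩ := h
    · exact .inl ⟨l, .inl rfl, hG.normApp_mul l⟩
    · exact .inl ⟨l, .inr rfl, hG.normApp_inv l⟩
  by_cases hf : f ∈ SA
  · exact .inr (.inl ⟨hf, fun ts => by rw [normApp, dif_neg h, if_pos hf]⟩)
  · exact .inr (.inr ⟨hf, fun ts => by rw [normApp, dif_neg h, if_neg hf]⟩)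

theorem isAssocOn_normApp (hG : IsGroupFamily SA G) : IsAssocOn SA (normApp SA G) := by
  intro f hf us ws vs hws hlen
  have hlen₁ : 2 ≤ (us ++ normApp SA G f ws :: vs).length := by simp; omega
  have hlen₂ : 2 ≤ (us ++ ws ++ vs).length := by simp; omega
  rcases hG.normApp_cases f with ⟨l, rfl | rfl, h⟩ | ⟨-, h⟩ | ⟨hf', -⟩
  · rw [h] at hlen₁
    rw [h, h, h]
    refine GroupSig.norm_congr ?_
    rw [GroupSig.value_mul hlen₁, GroupSig.value_mul hlen₂]
    simp [GroupSig.value_mul hws]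
  · exact absurd hf (hG.inv_notMem l)
  · rw [h] at hlen₁
    rw [h, h, h]
    refine congrArg (joinTm f) ?_
    rw [argString_app hlen₁, argString_app hlen₂]
    simp [argString_flattenRoot, argString_app hws]
  · exact absurd hf hf'

theorem redA_normApp (hG : IsGroupFamily SA G) {R : Set (Eqn F γ)}
    (hR : ∀ l, RGrules (G l).mul (G l).inv (G l).one ⊆ R) (f : F) (ts : List (Tm F γ)) :
    RedA SA R (.app f ts) (normApp SA G f ts) := by
  rcases hG.normApp_cases f with ⟨l, -, h⟩ | ⟨hf, h⟩ | ⟨-, h⟩ <;> rw [h]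
  · exact GroupSig.redA_norm (hG.mul_mem l) (hR l) _
  · exact redA_flattenRoot R hf _
  · exact .refl _

theorem norm_eq_of_isNormal (hG : IsGroupFamily SA G) {t : Tm F γ} (ht : IsNormal SA G t) (l : ι) :
    (G l).norm t = t := by
  cases ht with
  | var n => exact (GroupSig.alien_var n).norm_eq
  | cst c =>
    by_cases h : c = (G l).one
    · exact h ▸ GroupSig.norm_one
    · exact (GroupSig.alien_cst h).norm_eq
  | @app f ts _ h =>
    by_cases hmul : f = (G l).mul
    · rwa [hmul, hG.normApp_mul, ← hmul] at h
    by_cases hinv : f = (G l).inv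
    · rwa [hinv, hG.normApp_inv, ← hinv] at h
    · exact (GroupSig.alien_app (hmul ·.1) (hinv ·.1)).norm_eq

theorem isNormal_ofLetter (hG : IsGroupFamily SA G) (l : ι) {x : Tm F γ × Bool}
    (hx : IsNormal SA G x.1 ∧ (G l).Alien x.1) : IsNormal SA G ((G l).ofLetter x) := by
  classical
  obtain ⟨a, _ | _⟩ := x
  · refine .app (by simpa using hx.1) ?_
    rw [hG.normApp_inv, GroupSig.norm, GroupSig.value_inv, hx.2, GroupSig.read,
      FreeGroup.toWord_inv, FreeGroup.toWord_of]
    rfl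
  · exact hx.1

theorem isNormal_read (hG : IsGroupFamily SA G) (l : ι) {g : FreeGroup (Tm F γ)}
    (hg : g ∈ Subgroup.closure (FreeGroup.of '' {x | IsNormal SA G x ∧ (G l).Alien x})) :
    IsNormal SA G ((G l).read g) := by
  classical
  have hletter : ∀ x ∈ g.toWord, IsNormal SA G ((G l).ofLetter x) := fun x hx =>
    hG.isNormal_ofLetter l (letter_mem_of_mem_closure hg x hx)
  have hnorm : (G l).norm ((G l).read g) = (G l).read g :=
    congrArg (G l).read <|
      GroupSig.value_read (Subgroup.closure_mono (Set.image_mono fun _ hx => hx.2) hg)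
  have hread : (G l).read g = (G l).ofWord g.toWord := by rw [GroupSig.read]
  rw [hread] at hnorm ⊢
  match g.toWord, hletter, hnorm with
  | [], _, _ => exact .cst _
  | [x], hletter, _ => exact hletter x List.mem_cons_self
  | x :: y :: w, hletter, hnorm =>
    exact .app (List.forall_mem_map.2 hletter) ((hG.normApp_mul l _).trans hnorm)

theorem isNormal_normApp_of_eq_norm (hG : IsGroupFamily SA G) {l : ι} {f : F}
    {ts : List (Tm F γ)} (h : ∀ ts, normApp SA G f ts = (G l).norm (.app f ts))
    (hts : ∀ t ∈ ts, IsNormal SA G t) : IsNormal SA G (normApp SA G f ts) := by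
  have hvalue : ∀ t ∈ ts, (G l).value t ∈
      Subgroup.closure (FreeGroup.of '' {x | IsNormal SA G x ∧ (G l).Alien x}) := fun t ht =>
    have hsub : {x | ArgSub x t ∧ (G l).Alien x} ⊆ {x | IsNormal SA G x ∧ (G l).Alien x} :=
      fun _ hx => ⟨(hts t ht).of_argSub hx.1, hx.2⟩
    Subgroup.closure_mono (Set.image_mono hsub) (GroupSig.value_mem_closure t)
  rw [h]
  rcases GroupSig.alien_or_value_mem f hvalue with halien | hmem
  · rw [halien.norm_eq]
    exact .app hts ((h ts).trans halien.norm_eq)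
  · exact hG.isNormal_read l hmem

theorem isNormal_normApp (hG : IsGroupFamily SA G) (f : F) {ts : List (Tm F γ)}
    (hts : ∀ t ∈ ts, IsNormal SA G t) : IsNormal SA G (normApp SA G f ts) := by
  rcases hG.normApp_cases f with ⟨l, -, h⟩ | ⟨-, h⟩ | ⟨-, h⟩
  · exact hG.isNormal_normApp_of_eq_norm h hts
  · exact isNormal_normApp_of_eq_flattenRoot h hts
  · rw [h]
    exact .app hts (h ts)

end IsGroupFamily

section NormalTm

variable (SA G) in
/-- The carrier of the model used for confluence: normal terms. -/
abbrev NormalTm : Type := {t : Tm F γ // IsNormal SA G t}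

/-- The operation of a symbol on normal terms. -/
noncomputable def NormalTm.app (hG : IsGroupFamily SA G) (f : F) (ts : List (NormalTm SA G)) :
    NormalTm SA G :=
  ⟨normApp SA G f (ts.map Subtype.val), hG.isNormal_normApp f <| by
    simp only [List.mem_map]
    rintro _ ⟨t, -, rfl⟩
    exact t.2⟩

/-- The constants as normal terms. -/
def NormalTm.cst (c : γ) : NormalTm SA G := ⟨.cst c, .cst c⟩

/-- The variables as normal terms. -/
def NormalTm.var (n : ℕ) : NormalTm SA G := ⟨.var n, .var n⟩

theorem NormalTm.isAssocOn_app (hG : IsGroupFamily SA G) : IsAssocOn SA (NormalTm.app hG) := by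
  intro f hf us ws vs hws hlen
  refine Subtype.ext ?_
  simpa [NormalTm.app] using hG.isAssocOn_normApp f hf (us.map Subtype.val) (ws.map Subtype.val)
    (vs.map Subtype.val) (by simpa using hws) (by simpa using hlen)

theorem NormalTm.evalTm_eq_of_mem_RGrules (hG : IsGroupFamily SA G) {l : ι} {s t : Tm F γ}
    (h : (s, t) ∈ RGrules (G l).mul (G l).inv (G l).one) (ρ : ℕ → NormalTm SA G) :
    evalTm (NormalTm.app hG) NormalTm.cst ρ s = evalTm (NormalTm.app hG) NormalTm.cst ρ t := by
  have hnorm : ∀ {a : Tm F γ} (b : NormalTm SA G),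
      (G l).value a = (G l).value b.1 → (G l).norm a = b.1 := fun b h =>
    (GroupSig.norm_congr h).trans (hG.norm_eq_of_isNormal b.2 l)
  simp only [RGrules, Set.mem_insert_iff, Set.mem_singleton_iff, Prod.mk.injEq] at h
  refine Subtype.ext ?_
  rcases h with ⟨rfl, rfl⟩ | ⟨rfl, rfl⟩ | ⟨rfl, rfl⟩ | ⟨rfl, rfl⟩ | ⟨rfl, rfl⟩ | ⟨rfl, rfl⟩ |
      ⟨rfl, rfl⟩ <;>
    simp only [evalTm_app, evalTm_var, evalTm_cst, List.map_cons, List.map_nil, NormalTm.app,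
      hG.normApp_mul, hG.normApp_inv]
  case inr.inr.inr.inr.inr.inr =>
    refine GroupSig.norm_congr ?_
    simp [GroupSig.value_mul, GroupSig.value_inv]
  all_goals
    refine hnorm _ ?_
    simp [GroupSig.value_mul, GroupSig.value_inv, GroupSig.value_one, NormalTm.cst]

end NormalTm

end Family

theorem terminatingOn_iUnion_RGrules {ι : Type*} {SA : Set F} {fs is_ : ι → F} {ones : ι → γ}
    (hfs : ∀ l, fs l ∈ SA) (his : ∀ l, is_ l ∉ SA) (P : Tm F γ → Prop) :
    TerminatingOn (RewA SA (⋃ l, RGrules (fs l) (is_ l) (ones l))) P := by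
  refine terminatingOn_of_strictMono_algebra isAssocOn_weight isStrictMonoAlgebra_weight
    (K := 0) (fun s t hst => ?_) P
  obtain ⟨l, hl⟩ := Set.mem_iUnion.1 hst
  exact evalTm_weight_lt_of_mem_RGrules (hfs l) (his l) hl

theorem IsGroupFamily.confluentModAOn {ι : Type*} {SA : Set F} {G : ι → GroupSig F γ}
    (hG : IsGroupFamily SA G) (P : Tm F γ → Prop) :
    ConfluentModAOn SA (⋃ l, RGrules (G l).mul (G l).inv (G l).one) P := by
  refine confluentModAOn_of_model (J := NormalTm.app hG) (K := NormalTm.cst) (ρ := NormalTm.var)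
    Subtype.val (NormalTm.isAssocOn_app hG) (fun s t hst => ?_) (fun n => .refl _)
    (fun c => .refl _) (fun f ts => hG.redA_normApp (Set.subset_iUnion _) f _) P
  obtain ⟨l, hl⟩ := Set.mem_iUnion.1 hst
  exact NormalTm.evalTm_eq_of_mem_RGrules hG hl

theorem multi_RG_convergent_modulo_A_general
    {F γ : Type} {ι : Type*} (SA : Set F) (fs is_ : ι → F) (ones : ι → γ)
    (hfs : ∀ l, fs l ∈ SA) (his : ∀ l, is_ l ∉ SA)
    (hfs_inj : Function.Injective fs) (his_inj : Function.Injective is_) (P : Tm F γ → Prop) :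
    TerminatingOn (RewA SA (⋃ l, RGrules (fs l) (is_ l) (ones l))) P ∧
    ConfluentModAOn SA (⋃ l, RGrules (fs l) (is_ l) (ones l)) P :=
  ⟨terminatingOn_iUnion_RGrules hfs his P,
    IsGroupFamily.confluentModAOn (G := fun l => ⟨fs l, is_ l, ones l⟩)
      ⟨hfs, his, hfs_inj, his_inj⟩ P⟩

/-- Lemma 4.7: the union `⊎_{i=1}^n R(G_i)` of the rewrite systems of `n`
pairwise symbol-disjoint sets of group axioms is convergent modulo `A`:
terminating and confluent on associatively flat terms. -/
theorem multi_RG_convergent_modulo_A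
    {F γ : Type} [Finite F] (SA : Set F)
    (n : ℕ) (fs is_ : Fin n → F) (ones : Fin n → γ)
    (hfs : ∀ l, fs l ∈ SA) (his : ∀ l, is_ l ∉ SA)
    (hfi : ∀ l m, fs l ≠ is_ m)
    (hdisj : ∀ l m, l ≠ m → fs l ≠ fs m ∧ is_ l ≠ is_ m ∧ ones l ≠ ones m) :
    TerminatingOn (RewA SA (⋃ l : Fin n, RGrules (fs l) (is_ l) (ones l))) (Flat SA) ∧
    ConfluentModAOn SA (⋃ l : Fin n, RGrules (fs l) (is_ l) (ones l)) (Flat SA) := by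
  refine multi_RG_convergent_modulo_A_general SA fs is_ ones hfs his (fun l m h => ?_)
    (fun l m h => ?_) (Flat SA)
  · exact by_contra fun hlm => (hdisj l m hlm).1 h
  · exact by_contra fun hlm => (hdisj l m hlm).2.1 h

end CCModG
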